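/- arXiv:2601.16676 — 3 statements merged into one kernel-verified Lean document; each statement's English description precedes it below -/
import Mathlib

section
/- Let m, r, d be integers with d ≥ 1 and 2 ≤ 2r ≤ m−1. An m×m matrix polynomial P over ℂ is skew-symmetric of grade d with normal rank exactly 2r, degree exactly d, and no eigenvalues (finite or infinite) if and only if P = L J₂ᵣ Lᵀ for some m×2r matrix polynomial L such that: (a) L is a minimal basis (Forney's criterion); (b) the column degrees of L are nonincreasing, deg(L₁) ≥ deg(L₂) ≥ ⋯ ≥ deg(L₂ᵣ); and (c) deg(Lᵢ) + deg(L₂ᵣ₋ᵢ₊₁) = d for every i = 1, …, 2r. Here J₂ᵣ = [[0, Δᵣ], [−Δᵣ, 0]] with Δᵣ the r×r anti-identity matrix. -/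
open Polynomial Matrix

/-- The normal rank of a matrix polynomial: its rank as a matrix over the field of
rational functions ℂ(λ). -/
noncomputable def normalRank {m n : ℕ} (P : Matrix (Fin m) (Fin n) (Polynomial ℂ)) : ℕ :=
  (P.map (algebraMap (Polynomial ℂ) (RatFunc ℂ))).rank

/-- The degree of the `j`-th column of a matrix polynomial: the maximum of the degrees
of its entries. -/
noncomputable def colDegree {m k : ℕ} (L : Matrix (Fin m) (Fin k) (Polynomial ℂ))
    (j : Fin k) : ℕ :=
  Finset.univ.sup fun i => (L i j).natDegree

/-- The high-order coefficient matrix of a matrix polynomial: its `j`-th column consists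
of the coefficients of `λ ^ (colDegree L j)` in the `j`-th column of `L`. -/
noncomputable def highCoeff {m k : ℕ} (L : Matrix (Fin m) (Fin k) (Polynomial ℂ)) :
    Matrix (Fin m) (Fin k) ℂ :=
  Matrix.of fun i j => (L i j).coeff (colDegree L j)

/-- Forney's criterion: an m×k matrix polynomial is a minimal basis iff all its
evaluations have rank `k` and its high-order coefficient matrix has rank `k`. -/
def IsMinimalBasis {m k : ℕ} (L : Matrix (Fin m) (Fin k) (Polynomial ℂ)) : Prop :=
  (∀ α : ℂ, (L.map (Polynomial.eval α)).rank = k) ∧ (highCoeff L).rank = k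

/-- The 2r×2r matrix `J₂ᵣ = [[0, Δᵣ], [−Δᵣ, 0]]`, where `Δᵣ` is the r×r anti-identity. -/
noncomputable def Jmat (r : ℕ) : Matrix (Fin (2 * r)) (Fin (2 * r)) (Polynomial ℂ) :=
  Matrix.of fun i j =>
    if (i : ℕ) + (j : ℕ) + 1 = 2 * r ∧ (i : ℕ) < r then 1
    else if (i : ℕ) + (j : ℕ) + 1 = 2 * r ∧ (j : ℕ) < r then -1
    else 0

/-!
Write the saturated column module of `P` as the image of a left-invertible `M` (Smith normal form)
and make `M` column reduced, with column degrees `e`. Then `P = M Q Mᵀ` for a skew-symmetric `Q`,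
and the predictable degree property bounds the degree of `Q i j` by `d - e i - e j`. Evaluating
shows that `Q` is unimodular, and comparing leading coefficients shows that its matrix of maximal
degree coefficients is invertible as well, so that `Q⁻¹ j i` has degree at most `e i + e j - d`.
Since `∑ j, Q i j * Q⁻¹ j i = 1`, each row `i` has an index `j` for which both bounds are
nonnegative: there `e i + e j = d` and `Q i j` is a nonzero constant. Clearing with this pivot and
its mirror image splits off a hyperbolic plane with complementary degrees, and repeating this gives
`L` after sorting. For the minimality of `L` and for the converse, ranks of evaluations and of
leading coefficients pass through `L ↦ L J Lᵀ` because `J` is constant and invertible.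
-/

namespace PolynomialMatrix

section Rank

variable {K m n p : Type*} [Field K] [Fintype n] [Fintype p]

lemma rank_eq_card_iff_mulVec_injective {A : Matrix m n K} :
    A.rank = Fintype.card n ↔ Function.Injective A.mulVec := by
  have rank_nullity := A.mulVecLin.finrank_range_add_finrank_ker
  rw [Module.finrank_fintype_fun_eq_card, ← Matrix.rank] at rank_nullity
  rw [← Matrix.coe_mulVecLin, ← LinearMap.ker_eq_bot, ← Submodule.finrank_eq_zero]
  omega

lemma rank_mul_eq_right_of_mulVec_injective {A : Matrix m n K} (hA : Function.Injective A.mulVec)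
    (B : Matrix n p K) : (A * B).rank = B.rank := by
  rw [Matrix.rank, Matrix.mulVecLin_mul, LinearMap.range_comp, Matrix.rank]
  exact (Submodule.equivMapOfInjective A.mulVecLin hA _).finrank_eq.symm

lemma rank_conj_eq_card_iff [Fintype m] {A : Matrix m n K} {Q : Matrix n n K} :
    (A * Q * Aᵀ).rank = Fintype.card n ↔ A.rank = Fintype.card n ∧ Q.rank = Fintype.card n := by
  constructor
  · intro h
    have rank_le_A : (A * Q * Aᵀ).rank ≤ A.rank := by
      rw [Matrix.mul_assoc]
      exact Matrix.rank_mul_le_left _ _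
    have rank_le_Q : (A * Q * Aᵀ).rank ≤ Q.rank :=
      (Matrix.rank_mul_le_left _ _).trans (Matrix.rank_mul_le_right _ _)
    have A_le := A.rank_le_card_width
    have Q_le := Q.rank_le_card_width
    omega
  · rintro ⟨hA, hQ⟩
    have hA_inj := rank_eq_card_iff_mulVec_injective.1 hA
    calc (A * Q * Aᵀ).rank = (Q * Aᵀ).rank := by
          rw [Matrix.mul_assoc, rank_mul_eq_right_of_mulVec_injective hA_inj]
      _ = (A * Qᵀ).rank := by
          rw [← Matrix.rank_transpose, Matrix.transpose_mul, Matrix.transpose_transpose]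
      _ = Fintype.card n := by
          rw [rank_mul_eq_right_of_mulVec_injective hA_inj, Matrix.rank_transpose, hQ]

lemma isUnit_det_of_rank_eq_card [DecidableEq n] {Q : Matrix n n K}
    (hQ : Q.rank = Fintype.card n) : IsUnit Q.det :=
  (Matrix.isUnit_iff_isUnit_det Q).1 <|
    Matrix.mulVec_injective_iff_isUnit.1 (rank_eq_card_iff_mulVec_injective.1 hQ)

end Rank

section Smith

variable {R m n : Type*} [CommRing R] [IsDomain R] [IsPrincipalIdealRing R]
  [Fintype m] [Fintype n]

lemma exists_leftInvertible_mul_diagonal (P : Matrix m n R) :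
    ∃ (k : ℕ) (M : Matrix m (Fin k) R) (N : Matrix (Fin k) m R) (V : Matrix n (Fin k) R)
      (a : Fin k → R), N * M = 1 ∧ M * N * P = P ∧ (∀ i, a i ≠ 0) ∧ P * V = M * diagonal a := by
  classical
  obtain ⟨k, bM, bN, f, a, snf⟩ :=
    Submodule.smithNormalForm (Pi.basisFun R m) (LinearMap.range P.mulVecLin)
  let M : Matrix m (Fin k) R := of fun x i => bM (f i) x
  let N : Matrix (Fin k) m R := LinearMap.toMatrix' (LinearMap.pi fun i => bM.coord (f i))
  have N_mulVec (v : m → R) (i : Fin k) : (N *ᵥ v) i = bM.repr v (f i) := by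
    rw [← Matrix.toLin'_apply, Matrix.toLin'_toMatrix']
    rfl
  have N_mul_M : N * M = 1 := by
    ext i j
    have : (N * M) i j = (N *ᵥ bM (f j)) i := rfl
    simp [this, N_mulVec, Finsupp.single_apply, Matrix.one_apply, eq_comm]
  have M_single (i : Fin k) : M *ᵥ Pi.single i 1 = bM (f i) := Matrix.mulVec_single_one M i
  have N_basis (i : Fin k) : N *ᵥ bM (f i) = Pi.single i 1 := by
    rw [← M_single, Matrix.mulVec_mulVec, N_mul_M, Matrix.one_mulVec]
  have fixes_range : (M * N).mulVecLin ∘ₗ (LinearMap.range P.mulVecLin).subtype =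
      (LinearMap.range P.mulVecLin).subtype := by
    refine bN.ext fun i => ?_
    simp [snf, N_basis, M_single]
  choose v hv using fun i => (bN i).2
  refine ⟨k, M, N, of fun x i => v i x, a, N_mul_M, ?_, fun i hi => ?_, ?_⟩
  · refine Matrix.ext_of_mulVec_single fun j => ?_
    rw [← Matrix.mulVec_mulVec]
    exact LinearMap.congr_fun fixes_range ⟨_, LinearMap.mem_range_self P.mulVecLin _⟩
  · exact bN.ne_zero i (Subtype.ext (by simp [snf, hi]))
  · ext x i
    have : (P * of fun x i => v i x) x i = P.mulVecLin (v i) x := rfl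
    rw [this, hv, snf, Matrix.mul_diagonal, Pi.smul_apply, smul_eq_mul, mul_comm]
    rfl

lemma exists_leftInvertible_of_rank_map (F : Type*) [Field F] [Algebra R F] [IsFractionRing R F]
    (P : Matrix m n R) {k : ℕ} (hk : (P.map (algebraMap R F)).rank = k) :
    ∃ (M : Matrix m (Fin k) R) (N : Matrix (Fin k) m R), N * M = 1 ∧ M * N * P = P := by
  obtain ⟨l, M, N, V, a, N_mul_M, fixes, ha, P_mul_V⟩ := exists_leftInvertible_mul_diagonal P
  suffices l = k by
    subst this
    exact ⟨M, N, N_mul_M, fixes⟩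
  have diagonal_eq : N * P * V = diagonal a := by
    rw [Matrix.mul_assoc, P_mul_V, ← Matrix.mul_assoc, N_mul_M, Matrix.one_mul]
  have rank_diagonal : ((diagonal a).map (algebraMap R F)).rank = l := by
    rw [Matrix.diagonal_map (map_zero _), Matrix.rank_of_det_ne_zero, Fintype.card_fin]
    simpa [Matrix.det_diagonal, Finset.prod_ne_zero_iff] using ha
  refine le_antisymm ?_ ?_
  · rw [← rank_diagonal, ← hk, ← diagonal_eq, Matrix.map_mul, Matrix.map_mul]
    exact (Matrix.rank_mul_le_left _ _).trans (Matrix.rank_mul_le_right _ _)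
  · rw [← hk, ← fixes, Matrix.map_mul, Matrix.map_mul, Matrix.mul_assoc]
    refine (Matrix.rank_mul_le_left _ _).trans ?_
    simpa using Matrix.rank_le_card_width (M.map (algebraMap R F))

lemma rank_map_le_rank_map_of_isFractionRing {ι : Type*} [Finite ι] (F : Type*) [Field F]
    [Algebra R F] [IsFractionRing R F] {K : Type*} [Field K] (φ : R →+* K) (P : Matrix ι n R) :
    (P.map φ).rank ≤ (P.map (algebraMap R F)).rank := by
  have := Fintype.ofFinite ι
  obtain ⟨M, N, -, fixes⟩ := exists_leftInvertible_of_rank_map F P rfl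
  rw [← fixes, Matrix.map_mul, Matrix.map_mul, Matrix.mul_assoc, fixes]
  refine (Matrix.rank_mul_le_left _ _).trans ?_
  simpa using Matrix.rank_le_card_width (M.map φ)

end Smith

section IntegerDegree

variable {R : Type*} [CommRing R]

/-- The coefficient of `X ^ a`, for an integer exponent `a`; it is zero when `a` is negative. -/
noncomputable def intCoeff (a : ℤ) : R[X] →ₗ[R] R :=
  if 0 ≤ a then lcoeff R a.toNat else 0

/-- The polynomials of degree at most `a`, for an integer `a`. Integer bounds can be added and
subtracted freely; a negative bound leaves only the zero polynomial. -/
noncomputable def intDegreeLE (R : Type*) [CommRing R] (a : ℤ) : Submodule R R[X] :=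
  ⨅ b > a, LinearMap.ker (intCoeff b)

lemma mem_intDegreeLE {p : R[X]} {a : ℤ} :
    p ∈ intDegreeLE R a ↔ ∀ b > a, intCoeff b p = 0 := by
  simp [intDegreeLE]

lemma intCoeff_natCast (p : R[X]) (n : ℕ) : intCoeff (n : ℤ) p = p.coeff n := by
  simp [intCoeff]

lemma intCoeff_of_neg {a : ℤ} (ha : a < 0) (p : R[X]) : intCoeff a p = 0 := by
  simp [intCoeff, not_le.2 ha]

lemma mem_intDegreeLE_natCast {p : R[X]} {n : ℕ} : p ∈ intDegreeLE R n ↔ p.natDegree ≤ n := by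
  rw [mem_intDegreeLE, natDegree_le_iff_coeff_eq_zero]
  refine ⟨fun h k hk => intCoeff_natCast p k ▸ h k (by exact_mod_cast hk), fun h b hb => ?_⟩
  lift b to ℕ using by omega
  rw [intCoeff_natCast]
  exact h b (by exact_mod_cast hb)

lemma eq_zero_of_mem_intDegreeLE_of_neg {p : R[X]} {a : ℤ} (hp : p ∈ intDegreeLE R a)
    (ha : a < 0) : p = 0 := by
  ext k
  rw [← intCoeff_natCast, mem_intDegreeLE.1 hp k (by omega), coeff_zero]

lemma intDegreeLE_mono {a b : ℤ} (hab : a ≤ b) : intDegreeLE R a ≤ intDegreeLE R b :=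
  fun _ hp => mem_intDegreeLE.2 fun c hc => mem_intDegreeLE.1 hp c (lt_of_le_of_lt hab hc)

lemma mem_intDegreeLE_of_intCoeff_eq_zero {p : R[X]} {a : ℤ} (hp : p ∈ intDegreeLE R (a + 1))
    (htop : intCoeff (a + 1) p = 0) : p ∈ intDegreeLE R a := by
  refine mem_intDegreeLE.2 fun b hb => ?_
  obtain rfl | hlt := (Int.add_one_le_of_lt hb).eq_or_lt
  · exact htop
  · exact mem_intDegreeLE.1 hp b hlt

lemma mul_mem_intDegreeLE {p q : R[X]} {a b : ℤ} (hp : p ∈ intDegreeLE R a)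
    (hq : q ∈ intDegreeLE R b) : p * q ∈ intDegreeLE R (a + b) := by
  obtain ha | ha := lt_or_ge a 0
  · simp [eq_zero_of_mem_intDegreeLE_of_neg hp ha]
  obtain hb | hb := lt_or_ge b 0
  · simp [eq_zero_of_mem_intDegreeLE_of_neg hq hb]
  lift a to ℕ using ha
  lift b to ℕ using hb
  rw [mem_intDegreeLE_natCast] at hp hq
  exact_mod_cast mem_intDegreeLE_natCast.2 (natDegree_mul_le_of_le hp hq)

lemma intCoeff_add_mul {p q : R[X]} {a b : ℤ} (hp : p ∈ intDegreeLE R a)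
    (hq : q ∈ intDegreeLE R b) :
    intCoeff (a + b) (p * q) = intCoeff a p * intCoeff b q := by
  obtain ha | ha := lt_or_ge a 0
  · simp [eq_zero_of_mem_intDegreeLE_of_neg hp ha]
  obtain hb | hb := lt_or_ge b 0
  · simp [eq_zero_of_mem_intDegreeLE_of_neg hq hb]
  lift a to ℕ using ha
  lift b to ℕ using hb
  rw [mem_intDegreeLE_natCast] at hp hq
  rw [← Nat.cast_add, intCoeff_natCast, intCoeff_natCast, intCoeff_natCast,
    coeff_mul_add_eq_of_natDegree_le hp hq]

lemma C_mul_X_pow_mem_intDegreeLE (c : R) {a : ℤ} (ha : 0 ≤ a) :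
    C c * X ^ a.toNat ∈ intDegreeLE R a := by
  lift a to ℕ using ha
  exact mem_intDegreeLE_natCast.2 (natDegree_C_mul_X_pow_le c a)

lemma intCoeff_C_mul_X_pow (c : R) {a : ℤ} (ha : 0 ≤ a) :
    intCoeff a (C c * X ^ a.toNat) = c := by
  lift a to ℕ using ha
  simp [intCoeff_natCast]

end IntegerDegree

section Weights

variable {R m n p : Type*} [CommRing R] {a : m → ℤ} {b : n → ℤ} {c : p → ℤ}

/-- The `(i, j)` entry of `A` has degree at most `b j - a i`: in other words, `A` does not raise
degrees as a map between free modules whose `j`-th and `i`-th basis vectors are given the degrees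
`b j` and `a i`. -/
def WeightedDegreeLE (a : m → ℤ) (b : n → ℤ) (A : Matrix m n R[X]) : Prop :=
  ∀ i j, A i j ∈ intDegreeLE R (b j - a i)

/-- The coefficients of the maximal degrees `b j - a i` that `WeightedDegreeLE a b` allows.
For `a = 0` and `b` the column degrees, this is the high-order coefficient matrix. -/
noncomputable def leadingMatrix (a : m → ℤ) (b : n → ℤ) (A : Matrix m n R[X]) : Matrix m n R :=
  of fun i j => intCoeff (b j - a i) (A i j)

lemma weightedDegreeLE_zero_natCast {A : Matrix m n R[X]} {e : n → ℕ} :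
    WeightedDegreeLE 0 (fun j => (e j : ℤ)) A ↔ ∀ i j, (A i j).natDegree ≤ e j := by
  simp [WeightedDegreeLE, mem_intDegreeLE_natCast]

lemma leadingMatrix_zero_natCast (A : Matrix m n R[X]) (e : n → ℕ) :
    leadingMatrix 0 (fun j => (e j : ℤ)) A = of fun i j => (A i j).coeff (e j) := by
  simp [leadingMatrix, intCoeff_natCast]

lemma WeightedDegreeLE.transpose {A : Matrix m n R[X]} (hA : WeightedDegreeLE a b A) (d : ℤ) :
    WeightedDegreeLE (fun j => d - b j) (fun i => d - a i) Aᵀ := fun j i => by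
  rw [sub_sub_sub_cancel_left]
  exact hA i j

lemma leadingMatrix_transpose (A : Matrix m n R[X]) (d : ℤ) :
    leadingMatrix (fun j => d - b j) (fun i => d - a i) Aᵀ = (leadingMatrix a b A)ᵀ := by
  ext j i
  simp [leadingMatrix]

lemma WeightedDegreeLE.of_leadingMatrix_eq_zero {A : Matrix m n R[X]}
    (hA : WeightedDegreeLE a (fun j => b j + 1) A)
    (hlead : leadingMatrix a (fun j => b j + 1) A = 0) : WeightedDegreeLE a b A := fun i j => by
  have degree_eq : b j + 1 - a i = b j - a i + 1 := by ring
  refine mem_intDegreeLE_of_intCoeff_eq_zero (degree_eq ▸ hA i j) ?_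
  rw [← degree_eq]
  exact congrFun₂ hlead i j

lemma leadingMatrix_eq_zero_of_lt {b' : n → ℤ} {A : Matrix m n R[X]}
    (hA : WeightedDegreeLE a b A) (hb : ∀ j, b j < b' j) : leadingMatrix a b' A = 0 := by
  ext i j
  exact mem_intDegreeLE.1 (hA i j) _ (sub_lt_sub_right (hb j) _)

lemma weightedDegreeLE_one [DecidableEq m] (a : m → ℤ) :
    WeightedDegreeLE a a (1 : Matrix m m R[X]) := fun i j => by
  obtain rfl | hij := eq_or_ne i j
  · simpa using C_mul_X_pow_mem_intDegreeLE (1 : R) (sub_self (a i)).ge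
  · simp [Matrix.one_apply_ne hij]

lemma WeightedDegreeLE.nonneg_of_leftInvertible [Nontrivial R] [Fintype m] [DecidableEq n]
    {M : Matrix m n R[X]} {N : Matrix n m R[X]} (hNM : N * M = 1)
    (hM : WeightedDegreeLE 0 b M) (j : n) : 0 ≤ b j := by
  by_contra! hj
  have col_eq_zero (i : m) : M i j = 0 := eq_zero_of_mem_intDegreeLE_of_neg (hM i j) (by simpa)
  simpa [Matrix.mul_apply, col_eq_zero] using congrFun₂ hNM j j

lemma exists_weightedDegreeLE_add [Finite m] [Finite n] (a : m → ℤ) (b : n → ℤ)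
    (A : Matrix m n R[X]) : ∃ t : ℕ, WeightedDegreeLE a (fun j => b j + t) A := by
  obtain ⟨t, ht⟩ := Finite.exists_le fun ij : m × n =>
    ((A ij.1 ij.2).natDegree + a ij.1 - b ij.2).toNat
  refine ⟨t, fun i j => intDegreeLE_mono ?_ (mem_intDegreeLE_natCast.2 le_rfl)⟩
  have := ht (i, j)
  dsimp only at this ⊢
  omega

variable [Fintype n]

lemma WeightedDegreeLE.mul {A : Matrix m n R[X]} {B : Matrix n p R[X]}
    (hA : WeightedDegreeLE a b A) (hB : WeightedDegreeLE b c B) :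
    WeightedDegreeLE a c (A * B) := fun i k => by
  rw [Matrix.mul_apply]
  refine sum_mem fun j _ => ?_
  rw [← sub_add_sub_cancel' (b j) (a i) (c k)]
  exact mul_mem_intDegreeLE (hA i j) (hB j k)

lemma leadingMatrix_mul {A : Matrix m n R[X]} {B : Matrix n p R[X]}
    (hA : WeightedDegreeLE a b A) (hB : WeightedDegreeLE b c B) :
    leadingMatrix a c (A * B) = leadingMatrix a b A * leadingMatrix b c B := by
  ext i k
  simp only [leadingMatrix, of_apply, Matrix.mul_apply, map_sum]
  refine Finset.sum_congr rfl fun j _ => ?_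
  rw [← sub_add_sub_cancel' (b j) (a i) (c k), intCoeff_add_mul (hA i j) (hB j k)]

-- Forney's predictable degree property, in weighted form.
lemma WeightedDegreeLE.of_mul_left [Finite p] {A : Matrix m n R[X]} {B : Matrix n p R[X]}
    (hA : WeightedDegreeLE a b A) (hlead : Function.Injective (leadingMatrix a b A).mulVec)
    (hAB : WeightedDegreeLE a c (A * B)) : WeightedDegreeLE b c B := by
  have leading_eq_zero {t : ℕ} (hB : WeightedDegreeLE b (fun k => c k + t + 1) B) :
      leadingMatrix b (fun k => c k + t + 1) B = 0 := by
    have mul_eq : leadingMatrix a b A * leadingMatrix b (fun k => c k + t + 1) B =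
        leadingMatrix a b A * (0 : Matrix n p R) := by
      rw [← leadingMatrix_mul hA hB, Matrix.mul_zero]
      exact leadingMatrix_eq_zero_of_lt hAB fun k => by omega
    exact Matrix.ext_col fun k => hlead congr(($mul_eq).col k)
  obtain ⟨t, ht⟩ := exists_weightedDegreeLE_add b c B
  induction t with
  | zero => simpa using ht
  | succ t ih =>
    push_cast [← add_assoc] at ht
    exact ih (ht.of_leadingMatrix_eq_zero (leading_eq_zero ht))

lemma WeightedDegreeLE.conj {d : ℤ} {A : Matrix m n R[X]} {Q : Matrix n n R[X]}
    (hA : WeightedDegreeLE 0 b A) (hQ : WeightedDegreeLE b (fun j => d - b j) Q) :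
    WeightedDegreeLE 0 (fun _ => d) (A * Q * Aᵀ) := by
  simpa using (hA.mul hQ).mul (hA.transpose d)

lemma leadingMatrix_conj {d : ℤ} {A : Matrix m n R[X]} {Q : Matrix n n R[X]}
    (hA : WeightedDegreeLE 0 b A) (hQ : WeightedDegreeLE b (fun j => d - b j) Q) :
    leadingMatrix 0 (fun _ => d) (A * Q * Aᵀ) =
      leadingMatrix 0 b A * leadingMatrix b (fun j => d - b j) Q * (leadingMatrix 0 b A)ᵀ := by
  rw [← leadingMatrix_mul hA hQ, ← leadingMatrix_transpose A d,
    ← leadingMatrix_mul (hA.mul hQ) (hA.transpose d)]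
  simp

lemma WeightedDegreeLE.of_conj [Finite m] {d : ℤ} {A : Matrix m n R[X]} {Q : Matrix n n R[X]}
    (hA : WeightedDegreeLE 0 b A) (hlead : Function.Injective (leadingMatrix 0 b A).mulVec)
    (hAQA : WeightedDegreeLE 0 (fun _ => d) (A * Q * Aᵀ)) :
    WeightedDegreeLE b (fun j => d - b j) Q := by
  have hQA : WeightedDegreeLE b (fun _ => d) (Q * Aᵀ) :=
    hA.of_mul_left hlead (by rwa [← Matrix.mul_assoc])
  have hAQt : WeightedDegreeLE 0 (fun j => d - b j) (A * Qᵀ) := by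
    simpa [Matrix.transpose_mul, ← Pi.zero_def] using hQA.transpose d
  simpa using (hA.of_mul_left hlead hAQt).transpose d

end Weights

section ColumnReduction

variable {K m ι : Type*} [Field K] [Fintype ι] [DecidableEq ι]

lemma exists_isUnit_det_leadingMatrix_col (e : ι → ℤ) {c : ι → K} (hc : c ≠ 0) :
    ∃ (U : Matrix ι ι K[X]) (k : ι), IsUnit U.det ∧ WeightedDegreeLE e e U ∧
      (leadingMatrix e e U).col k = c := by
  obtain ⟨k, hk, hmax⟩ := (Set.toFinite {j | c j ≠ 0}).exists_maximalFor e _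
    (Function.ne_iff.1 hc)
  have le_of_ne_zero {i : ι} (hi : c i ≠ 0) : 0 ≤ e k - e i := by
    have := (le_total (e i) (e k)).elim id (hmax hi)
    omega
  let x : ι → K[X] := fun i => C (c i) * X ^ (e k - e i).toNat
  refine ⟨(1 : Matrix ι ι K[X]).updateCol k x, k, ?_, fun i j => ?_, funext fun i => ?_⟩
  · rw [← Matrix.cramer_apply, Matrix.cramer_one]
    simpa [x] using hk
  · obtain rfl | hj := eq_or_ne j k
    · rw [Matrix.updateCol_self]
      by_cases hi : c i = 0
      · simp [x, hi]
      · exact C_mul_X_pow_mem_intDegreeLE _ (le_of_ne_zero hi)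
    · rw [Matrix.updateCol_ne hj]
      exact weightedDegreeLE_one e i j
  · by_cases hi : c i = 0
    · simp [leadingMatrix, x, hi]
    · simpa [leadingMatrix] using intCoeff_C_mul_X_pow (c i) (le_of_ne_zero hi)

lemma exists_isUnit_det_weightedDegreeLE_sub_single {M : Matrix m ι K[X]} {e : ι → ℤ}
    (hM : WeightedDegreeLE 0 e M) (hlead : ¬ Function.Injective (leadingMatrix 0 e M).mulVec) :
    ∃ (U : Matrix ι ι K[X]) (k : ι), IsUnit U.det ∧
      WeightedDegreeLE 0 (e - Pi.single k 1) (M * U) := by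
  obtain ⟨c, hc_ker, hc⟩ : ∃ c, leadingMatrix 0 e M *ᵥ c = 0 ∧ c ≠ 0 := by
    rw [← Matrix.coe_mulVecLin, injective_iff_map_eq_zero] at hlead
    push Not at hlead
    exact hlead
  obtain ⟨U, k, hU, hUe, hUk⟩ := exists_isUnit_det_leadingMatrix_col e hc
  refine ⟨U, k, hU, fun i j => ?_⟩
  have hMU := hM.mul hUe i j
  obtain rfl | hj := eq_or_ne j k
  · have leading_eq_zero : leadingMatrix 0 e (M * U) i j = 0 := by
      rw [leadingMatrix_mul hM hUe]
      exact congrFun (hUk ▸ hc_ker : leadingMatrix 0 e M *ᵥ (leadingMatrix e e U).col j = 0) i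
    have bound_eq :
        (e - Pi.single j 1 : ι → ℤ) j - (0 : m → ℤ) i + 1 = e j - (0 : m → ℤ) i := by simp
    exact mem_intDegreeLE_of_intCoeff_eq_zero (bound_eq ▸ hMU) (bound_eq ▸ leading_eq_zero)
  · simpa [hj] using hMU

-- Each step lowers one of the column weights, which are nonnegative, so the reduction stops.
lemma exists_isUnit_det_leadingMatrix_injective [Fintype m]
    {M : Matrix m ι K[X]} {N : Matrix ι m K[X]} (hNM : N * M = 1) :
    ∃ (U : Matrix ι ι K[X]) (e : ι → ℤ), IsUnit U.det ∧ WeightedDegreeLE 0 e (M * U) ∧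
      Function.Injective (leadingMatrix 0 e (M * U)).mulVec := by
  let Admissible : Matrix ι ι K[X] × (ι → ℤ) → Prop := fun Ue =>
    IsUnit Ue.1.det ∧ WeightedDegreeLE 0 Ue.2 (M * Ue.1)
  have exists_admissible : ∃ Ue, Admissible Ue := by
    obtain ⟨t, ht⟩ := exists_weightedDegreeLE_add 0 (0 : ι → ℤ) M
    exact ⟨(1, fun _ => t), by simp, by simpa using ht⟩
  obtain ⟨⟨U, e⟩, ⟨hU, he⟩, hmin⟩ := exists_minimalFor_of_wellFoundedLT Admissible
    (fun Ue => (∑ j, Ue.2 j).toNat) exists_admissible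
  refine ⟨U, e, hU, he, by_contra fun hlead => ?_⟩
  obtain ⟨V, k, hV, hVe⟩ := exists_isUnit_det_weightedDegreeLE_sub_single he hlead
  have hUV : IsUnit (U * V).det := by simpa only [Matrix.det_mul] using hU.mul hV
  rw [Matrix.mul_assoc] at hVe
  have left_inverse : (U * V)⁻¹ * N * (M * (U * V)) = 1 := by
    rw [Matrix.mul_assoc, ← Matrix.mul_assoc N, hNM, Matrix.one_mul, Matrix.nonsing_inv_mul _ hUV]
  have sum_nonneg : 0 ≤ ∑ j, (e - Pi.single k 1 : ι → ℤ) j :=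
    Finset.sum_nonneg fun j _ => hVe.nonneg_of_leftInvertible left_inverse j
  have sum_eq : ∑ j, (e - Pi.single k 1 : ι → ℤ) j = ∑ j, e j - 1 := by simp
  have not_lt : ¬ (∑ j, (e - Pi.single k 1 : ι → ℤ) j).toNat < (∑ j, e j).toNat :=
    fun hlt => (hmin (j := (U * V, e - Pi.single k 1)) ⟨hUV, hVe⟩ hlt.le).not_gt hlt
  omega

end ColumnReduction

section Hyperbolic

variable {R K ι : Type*} [CommRing R] [Field K] {e : ι → ℤ} {d : ℤ}

/-- `Q` is a sum of `n` hyperbolic planes `u ∧ w`, with polynomial vectors `u` and `w` bounded by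
complementary degrees `f` and `d - f` relative to the weights `e`. Ordering each pair so that
`f ≥ d - f` costs nothing. -/
def HasHyperbolicForm (e : ι → ℤ) (d : ℤ) (n : ℕ) (Q : Matrix ι ι R[X]) : Prop :=
  ∃ (f : Fin n → ℤ) (u w : Matrix ι (Fin n) R[X]), WeightedDegreeLE e f u ∧
    WeightedDegreeLE e (fun k => d - f k) w ∧ (∀ k, d ≤ 2 * f k) ∧ Q = u * wᵀ - w * uᵀ

lemma hasHyperbolicForm_zero : HasHyperbolicForm e d 0 (0 : Matrix ι ι R[X]) :=
  ⟨0, 0, 0, fun _ k => k.elim0, fun _ k => k.elim0, fun k => k.elim0, by simp⟩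

lemma HasHyperbolicForm.add_vecMulVec {n : ℕ} {Q : Matrix ι ι R[X]}
    (hQ : HasHyperbolicForm e d n Q) {x y : ι → R[X]} {g : ℤ}
    (hx : ∀ i, x i ∈ intDegreeLE R (g - e i)) (hy : ∀ i, y i ∈ intDegreeLE R (d - g - e i)) :
    HasHyperbolicForm e d (n + 1) (Q + (vecMulVec x y - vecMulVec y x)) := by
  wlog hg : d ≤ 2 * g generalizing x y g
  · have swap : vecMulVec x y - vecMulVec y x = vecMulVec y (-x) - vecMulVec (-x) y := by
      simp [neg_add_eq_sub]
    rw [swap]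
    exact this hy (fun i => by simpa using hx i) (by omega)
  obtain ⟨f, u, w, hu, hw, hf, rfl⟩ := hQ
  refine ⟨Fin.cons g f, of fun i => Fin.cons (x i) (u i), of fun i => Fin.cons (y i) (w i),
    fun i => Fin.cases (hx i) (hu i), fun i => Fin.cases (hy i) (hw i), Fin.cases hg hf, ?_⟩
  ext1 i j
  simp only [Matrix.add_apply, Matrix.sub_apply, Matrix.mul_apply, transpose_apply, vecMulVec_apply,
    of_apply, Fin.sum_univ_succ, Fin.cons_zero, Fin.cons_succ]
  ring

variable {Q : Matrix ι ι K[X]}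

lemma apply_swap_of_transpose_eq_neg {R : Type*} [Neg R] {A : Matrix ι ι R} (hA : Aᵀ = -A)
    (i j : ι) : A i j = -A j i :=
  congrFun₂ hA j i

lemma apply_self_of_transpose_eq_neg (h2 : (2 : K) ≠ 0) (hskew : Qᵀ = -Q) (a : ι) :
    Q a a = 0 := by
  have two_mul_eq_zero : C (2 : K) * Q a a = 0 := by
    rw [C_ofNat, two_mul]
    nth_rw 1 [apply_swap_of_transpose_eq_neg hskew a a]
    exact neg_add_cancel _
  simpa [h2] using two_mul_eq_zero

/-- The skew Schur complement: what remains of `Q` after splitting off the hyperbolic plane of the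
indices `a` and `b`, where `c` stands for the entry `Q a b`. -/
noncomputable def skewSchurComplement (Q : Matrix ι ι K[X]) (a b : ι) (c : K) : Matrix ι ι K[X] :=
  Q - (vecMulVec (C c⁻¹ • Q.col b) (Q.row a) - vecMulVec (Q.row a) (C c⁻¹ • Q.col b))

lemma skewSchurComplement_apply (a b : ι) (c : K) (i j : ι) :
    skewSchurComplement Q a b c i j =
      Q i j - C c⁻¹ * (Q i b * Q a j - Q a i * Q j b) := by
  simp only [skewSchurComplement, Matrix.sub_apply, vecMulVec_apply, Pi.smul_apply, col_apply,
    row_apply, smul_eq_mul]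
  ring

lemma transpose_skewSchurComplement (hskew : Qᵀ = -Q) (a b : ι) (c : K) :
    (skewSchurComplement Q a b c)ᵀ = -skewSchurComplement Q a b c := by
  ext1 i j
  rw [transpose_apply, neg_apply, skewSchurComplement_apply, skewSchurComplement_apply,
    apply_swap_of_transpose_eq_neg hskew j i]
  ring

lemma skewSchurComplement_apply_eq_zero (h2 : (2 : K) ≠ 0) (hskew : Qᵀ = -Q) {a b : ι}
    {c : K} (hc : c ≠ 0) (hab : Q a b = C c) {i : ι} (hi : i = a ∨ i = b) (j : ι) :
    skewSchurComplement Q a b c i j = 0 := by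
  have inv_mul : C c⁻¹ * C c = 1 := by rw [← C_mul, inv_mul_cancel₀ hc, C_1]
  have diag := apply_self_of_transpose_eq_neg h2 hskew
  rw [skewSchurComplement_apply]
  obtain rfl | rfl := hi
  · rw [hab, diag]
    linear_combination -Q i j * inv_mul
  · rw [hab, diag, apply_swap_of_transpose_eq_neg hskew i j]
    linear_combination Q j i * inv_mul

lemma WeightedDegreeLE.col_row_bounds (hskew : Qᵀ = -Q)
    (hQ : WeightedDegreeLE e (fun j => d - e j) Q) {a b : ι} (hab : e a + e b = d) (c : K) :
    (∀ i, (C c • Q.col b) i ∈ intDegreeLE K (e a - e i)) ∧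
      ∀ i, Q.row a i ∈ intDegreeLE K (d - e a - e i) := by
  refine ⟨fun i => ?_, fun i => ?_⟩
  · rw [← hab] at hQ
    rw [Pi.smul_apply, smul_eq_mul, ← smul_eq_C_mul]
    simpa using Submodule.smul_mem _ c (hQ i b)
  · rw [row_apply, apply_swap_of_transpose_eq_neg hskew]
    exact neg_mem (hQ i a)

lemma weightedDegreeLE_skewSchurComplement (hskew : Qᵀ = -Q)
    (hQ : WeightedDegreeLE e (fun j => d - e j) Q) {a b : ι} (hab : e a + e b = d) (c : K) :
    WeightedDegreeLE e (fun j => d - e j) (skewSchurComplement Q a b c) := fun i j => by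
  obtain ⟨hx, hy⟩ := hQ.col_row_bounds hskew hab c⁻¹
  have left := mul_mem_intDegreeLE (hx i) (hy j)
  have right := mul_mem_intDegreeLE (hy i) (hx j)
  rw [show e a - e i + (d - e a - e j) = d - e j - e i by ring] at left
  rw [show d - e a - e i + (e a - e j) = d - e j - e i by ring] at right
  exact sub_mem (hQ i j) (sub_mem left right)

variable [Fintype ι] {S : Matrix ι ι K[X]}

lemma skewSchurComplement_mul_apply (hskew : Qᵀ = -Q) {a b : ι} (c : K) {i k : ι}
    (hak : (Q * S) a k = 0) (hbk : (Q * S) b k = 0) :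
    (skewSchurComplement Q a b c * S) i k = (Q * S) i k := by
  have row_vecMul (l : ι) : (Q.row l ᵥ* S) = (Q * S).row l := rfl
  have col_vecMul : Q.col b ᵥ* S = -(Q * S).row b := by
    rw [← Matrix.row_transpose, hskew, ← row_vecMul, ← Matrix.neg_vecMul]
    rfl
  rw [skewSchurComplement, Matrix.sub_mul, Matrix.sub_mul, Matrix.vecMulVec_mul,
    Matrix.vecMulVec_mul, Matrix.smul_vecMul, row_vecMul, col_vecMul]
  simp [vecMulVec_apply, hak, hbk]

lemma exists_constant_pivot (hQ : WeightedDegreeLE e (fun j => d - e j) Q)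
    (hS : WeightedDegreeLE (fun j => d - e j) e S) {a : ι} (hQS : (Q * S) a a ≠ 0) :
    ∃ (b : ι) (c : K), c ≠ 0 ∧ Q a b = C c ∧ e a + e b = d := by
  obtain ⟨b, -, hb⟩ := Finset.exists_ne_zero_of_sum_ne_zero (Matrix.mul_apply (M := Q) ▸ hQS)
  have Q_ne_zero := left_ne_zero_of_mul hb
  have Q_bound_nonneg : 0 ≤ d - e b - e a :=
    not_lt.1 fun h => Q_ne_zero (eq_zero_of_mem_intDegreeLE_of_neg (hQ a b) h)
  have S_bound_nonneg : 0 ≤ e a - (d - e b) :=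
    not_lt.1 fun h => right_ne_zero_of_mul hb (eq_zero_of_mem_intDegreeLE_of_neg (hS b a) h)
  have weights : d - e b - e a = (0 : ℕ) := by push_cast; omega
  have Q_eq_C := eq_C_of_natDegree_le_zero (mem_intDegreeLE_natCast.1 (weights ▸ hQ a b))
  exact ⟨b, _, fun h => Q_ne_zero (by rw [Q_eq_C, h, C_0]), Q_eq_C, by omega⟩

-- Split off one constant pivot and its partner at a time; `S` is an inverse of `Q` on the
-- indices in `s` that remain.
lemma hasHyperbolicForm_of_support [DecidableEq ι] (h2 : (2 : K) ≠ 0)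
    (hS : WeightedDegreeLE (fun j => d - e j) e S) (s : Finset ι) (hskew : Qᵀ = -Q)
    (hQ : WeightedDegreeLE e (fun j => d - e j) Q) (hsupp : ∀ i ∉ s, ∀ j, Q i j = 0)
    (hQS : ∀ i ∈ s, ∀ k ∈ s, (Q * S) i k = (1 : Matrix ι ι K[X]) i k) :
    ∃ n, s.card = 2 * n ∧ HasHyperbolicForm e d n Q := by
  induction s using Finset.strongInduction generalizing Q with | H s ih =>
  obtain rfl | ⟨a, ha⟩ := s.eq_empty_or_nonempty
  · obtain rfl : Q = 0 := Matrix.ext fun i => hsupp i (Finset.notMem_empty i)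
    exact ⟨0, rfl, hasHyperbolicForm_zero⟩
  obtain ⟨b, c, hc, hab, hd⟩ := exists_constant_pivot hQ hS (a := a) (by simp [hQS a ha a ha])
  have hb : b ∈ s := by_contra fun hb => hc <| by
    simpa [hab, hsupp b hb a] using apply_swap_of_transpose_eq_neg hskew a b
  have hne : a ≠ b := by
    rintro rfl
    rw [apply_self_of_transpose_eq_neg h2 hskew, eq_comm, C_eq_zero] at hab
    exact hc hab
  have complement_support (i : ι) (hi : i ∉ s \ {a, b}) (j : ι) :
      skewSchurComplement Q a b c i j = 0 := by
    by_cases his : i ∈ s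
    · exact skewSchurComplement_apply_eq_zero h2 hskew hc hab (by grind) j
    · simp [skewSchurComplement_apply, hsupp i his, apply_swap_of_transpose_eq_neg hskew a i]
  have complement_mul (i : ι) (hi : i ∈ s \ {a, b}) (k : ι) (hk : k ∈ s \ {a, b}) :
      (skewSchurComplement Q a b c * S) i k = (1 : Matrix ι ι K[X]) i k := by
    rw [skewSchurComplement_mul_apply hskew, hQS i (by grind) k (by grind)]
    · rw [hQS a ha k (by grind), Matrix.one_apply_ne (by grind)]
    · rw [hQS b hb k (by grind), Matrix.one_apply_ne (by grind)]
  obtain ⟨n, hn, hform⟩ := ih (s \ {a, b}) (by grind) (transpose_skewSchurComplement hskew a b c)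
    (weightedDegreeLE_skewSchurComplement hskew hQ hd c) complement_support complement_mul
  refine ⟨n + 1, by grind, ?_⟩
  obtain ⟨hx, hy⟩ := hQ.col_row_bounds hskew hd c⁻¹
  simpa [skewSchurComplement] using hform.add_vecMulVec hx hy

end Hyperbolic

section NoEigenvalues

variable {R K m n : Type*} [CommRing R] [Field K]

lemma HasHyperbolicForm.conj [Fintype n] {a : m → ℤ} {b : n → ℤ} {d : ℤ} {k : ℕ}
    {Q : Matrix n n R[X]} (hQ : HasHyperbolicForm b d k Q) {M : Matrix m n R[X]}
    (hM : WeightedDegreeLE a b M) : HasHyperbolicForm a d k (M * Q * Mᵀ) := by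
  obtain ⟨f, u, w, hu, hw, hf, rfl⟩ := hQ
  refine ⟨f, M * u, M * w, hM.mul hu, hM.mul hw, hf, ?_⟩
  simp only [Matrix.mul_sub, Matrix.sub_mul, Matrix.transpose_mul, Matrix.mul_assoc]

variable [Fintype m]

lemma exists_skew_conj_leadingMatrix_injective (F : Type*) [Field F] [Algebra K[X] F]
    [IsFractionRing K[X] F] {P : Matrix m m K[X]} (hskew : Pᵀ = -P) {k : ℕ}
    (hrank : (P.map (algebraMap K[X] F)).rank = k) :
    ∃ (M : Matrix m (Fin k) K[X]) (e : Fin k → ℤ) (Q : Matrix (Fin k) (Fin k) K[X]),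
      WeightedDegreeLE 0 e M ∧ Function.Injective (leadingMatrix 0 e M).mulVec ∧
        Qᵀ = -Q ∧ P = M * Q * Mᵀ := by
  obtain ⟨M, N, hNM, hMNP⟩ := exists_leftInvertible_of_rank_map F P hrank
  obtain ⟨U, e, hU, hMU, hlead⟩ := exists_isUnit_det_leadingMatrix_injective hNM
  let N' := U⁻¹ * N
  have hMNP' : M * U * N' * P = P := by
    rw [Matrix.mul_assoc M, Matrix.mul_nonsing_inv_cancel_left _ _ hU, hMNP]
  have hPMN' : P * (M * U * N')ᵀ = P := by
    rw [← neg_inj, ← Matrix.neg_mul, ← hskew, ← Matrix.transpose_mul, hMNP']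
  refine ⟨M * U, e, N' * P * N'ᵀ, hMU, hlead, ?_, ?_⟩
  · simp [Matrix.mul_assoc, hskew]
  · calc P = M * U * N' * P * (M * U * N')ᵀ := by rw [hMNP', hPMN']
      _ = M * U * (N' * P * N'ᵀ) * (M * U)ᵀ := by
        simp only [Matrix.transpose_mul, Matrix.mul_assoc]

lemma isUnit_of_forall_eval_ne_zero [IsAlgClosed K] {p : K[X]} (hp : ∀ α, p.eval α ≠ 0) :
    IsUnit p :=
  isUnit_iff_degree_eq_zero.2 <| by_contra fun h => (IsAlgClosed.exists_root p h).elim hp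

lemma isUnit_det_of_rank_eval_conj [IsAlgClosed K] [Fintype n] [DecidableEq n]
    {M : Matrix m n K[X]} {Q : Matrix n n K[X]}
    (h : ∀ α : K, ((M * Q * Mᵀ).map (eval α)).rank = Fintype.card n) : IsUnit Q.det := by
  refine isUnit_of_forall_eval_ne_zero fun α => ?_
  have eval_conj : (M * Q * Mᵀ).map (eval α) =
      M.map (eval α) * Q.map (eval α) * (M.map (eval α))ᵀ := by
    simp only [← coe_evalRingHom, Matrix.map_mul, Matrix.transpose_map]
  have hQ := (rank_conj_eq_card_iff.1 (eval_conj ▸ h α)).2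
  simpa [← coe_evalRingHom, RingHom.map_det] using (isUnit_det_of_rank_eq_card hQ).ne_zero

theorem hasHyperbolicForm_of_no_eigenvalues [IsAlgClosed K] (h2 : (2 : K) ≠ 0)
    {P : Matrix m m K[X]} (hskew : Pᵀ = -P) {d r : ℕ} (hdeg : ∀ i j, (P i j).natDegree ≤ d)
    (hrank : (P.map (algebraMap K[X] (RatFunc K))).rank = 2 * r)
    (heval : ∀ α : K, (P.map (eval α)).rank = 2 * r)
    (hlead : (of fun i j => (P i j).coeff d).rank = 2 * r) :
    HasHyperbolicForm 0 d r P := by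
  have hP : WeightedDegreeLE 0 (fun _ => (d : ℤ)) P := weightedDegreeLE_zero_natCast.2 hdeg
  rw [← leadingMatrix_zero_natCast P fun _ => d] at hlead
  obtain ⟨M, e, Q, hM, hMlead, hQskew, rfl⟩ :=
    exists_skew_conj_leadingMatrix_injective (RatFunc K) hskew hrank
  have hQ := hM.of_conj hMlead hP
  have hQlead : Function.Injective (leadingMatrix e (fun j => d - e j) Q).mulVec := by
    rw [leadingMatrix_conj hM hQ] at hlead
    exact rank_eq_card_iff_mulVec_injective.1 (rank_conj_eq_card_iff.1 (by simpa using hlead)).2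
  have hQ_mul_inv : Q * Q⁻¹ = 1 :=
    Matrix.mul_nonsing_inv _ (isUnit_det_of_rank_eval_conj (by simpa using heval))
  have hQinv : WeightedDegreeLE (fun j => d - e j) e Q⁻¹ :=
    hQ.of_mul_left hQlead (hQ_mul_inv ▸ weightedDegreeLE_one e)
  obtain ⟨n, hn, hform⟩ := hasHyperbolicForm_of_support h2 hQinv Finset.univ hQskew hQ
    (by simp) (by simp [hQ_mul_inv])
  obtain rfl : r = n := by simpa using hn
  exact hform.conj hM

end NoEigenvalues

section SkewJ

/-- The matrix `J₂ᵣ = [[0, Δᵣ], [-Δᵣ, 0]]` over an arbitrary commutative ring. -/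
def skewJ (R : Type*) [CommRing R] (r : ℕ) : Matrix (Fin (2 * r)) (Fin (2 * r)) R :=
  of fun i j =>
    if (i : ℕ) + (j : ℕ) + 1 = 2 * r ∧ (i : ℕ) < r then 1
    else if (i : ℕ) + (j : ℕ) + 1 = 2 * r ∧ (j : ℕ) < r then -1
    else 0

/-- The splitting of the indices of `J₂ᵣ` into two halves, the second one in reverse order, which
turns the anti-identity blocks into identity blocks. -/
def foldEquiv (r : ℕ) : Fin r ⊕ Fin r ≃ Fin (2 * r) :=
  ((Equiv.refl _).sumCongr Fin.revPerm).trans (finSumFinEquiv.trans (finCongr (two_mul r).symm))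

variable {R S : Type*} [CommRing R] [CommRing S] {r : ℕ}

lemma coe_foldEquiv_inl (k : Fin r) : (foldEquiv r (.inl k) : ℕ) = k := rfl

lemma coe_foldEquiv_inr (k : Fin r) : (foldEquiv r (.inr k) : ℕ) = r + (r - (k + 1)) := by
  simp [foldEquiv, add_comm]

lemma rev_foldEquiv_inl (k : Fin r) : (foldEquiv r (.inl k)).rev = foldEquiv r (.inr k) := by
  rw [Fin.ext_iff, Fin.val_rev, coe_foldEquiv_inl, coe_foldEquiv_inr]
  omega

lemma skewJ_eq_reindex :
    skewJ R r = Matrix.reindex (foldEquiv r) (foldEquiv r) (-Matrix.J (Fin r) R) := by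
  refine (Equiv.symm_apply_eq _).1 (Matrix.ext ?_)
  rintro (i | i) (j | j) <;>
    simp only [Matrix.reindex_symm, Matrix.reindex_apply, Equiv.symm_symm, Matrix.submatrix_apply,
      skewJ, of_apply, Matrix.J, Matrix.neg_apply, fromBlocks_apply₁₁, fromBlocks_apply₁₂,
      fromBlocks_apply₂₁, fromBlocks_apply₂₂, coe_foldEquiv_inl, coe_foldEquiv_inr,
      Matrix.one_apply, Matrix.zero_apply, Fin.ext_iff] <;>
    grind

lemma transpose_skewJ : (skewJ R r)ᵀ = -skewJ R r := by
  rw [skewJ_eq_reindex, Matrix.transpose_reindex, Matrix.transpose_neg, Matrix.J_transpose]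
  rfl

lemma map_skewJ (φ : R →+* S) : (skewJ R r).map φ = skewJ S r := by
  ext i j
  simp only [skewJ, Matrix.map_apply, of_apply, apply_ite φ, map_one, map_neg, map_zero]

lemma rank_skewJ {K : Type*} [Field K] : (skewJ K r).rank = 2 * r := by
  rw [skewJ_eq_reindex, Matrix.rank_reindex, Matrix.rank_of_isUnit, Fintype.card_sum,
    Fintype.card_fin, two_mul]
  exact ((Matrix.isUnit_iff_isUnit_det _).2 (Matrix.isUnit_det_J (Fin r) K)).neg

lemma skewJ_apply_of_ne_rev {i j : Fin (2 * r)} (hij : j ≠ i.rev) : skewJ R r i j = 0 := by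
  rw [Ne, Fin.ext_iff, Fin.val_rev] at hij
  simp only [skewJ, of_apply]
  grind

lemma weightedDegreeLE_skewJ {F : Fin (2 * r) → ℤ} {d : ℤ} (hF : ∀ i, F i + F i.rev = d) :
    WeightedDegreeLE F (fun j => d - F j) (skewJ R[X] r) := fun i j => by
  by_cases hij : j = i.rev
  · rw [← map_skewJ (C : R →+* R[X]), show d - F j - F i = (0 : ℕ) by grind]
    exact mem_intDegreeLE_natCast.2 (natDegree_C _).le
  · simp [skewJ_apply_of_ne_rev hij]

lemma leadingMatrix_skewJ {F : Fin (2 * r) → ℤ} {d : ℤ} (hF : ∀ i, F i + F i.rev = d) :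
    leadingMatrix F (fun j => d - F j) (skewJ R[X] r) = skewJ R r := by
  ext i j
  by_cases hij : j = i.rev
  · rw [← map_skewJ (C : R →+* R[X]), leadingMatrix, of_apply,
      show d - F j - F i = (0 : ℕ) by grind, intCoeff_natCast, Matrix.map_apply, coeff_C_zero]
  · simp [leadingMatrix, skewJ_apply_of_ne_rev hij]

variable {m : Type*} {L : Matrix m (Fin (2 * r)) R}

lemma conj_skewJ_fromCols (A B : Matrix m (Fin r) R) :
    (fromCols A B).submatrix id (foldEquiv r).symm * skewJ R r *
      ((fromCols A B).submatrix id (foldEquiv r).symm)ᵀ = A * Bᵀ - B * Aᵀ := by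
  rw [skewJ_eq_reindex, Matrix.reindex_apply, Matrix.transpose_submatrix,
    Matrix.submatrix_mul_equiv, Matrix.submatrix_mul_equiv, Matrix.J, Matrix.fromBlocks_neg,
    Matrix.transpose_fromCols, Matrix.fromCols_mul_fromBlocks, Matrix.fromCols_mul_fromRows]
  simp [sub_eq_neg_add]

lemma transpose_conj_skewJ : (L * skewJ R r * Lᵀ)ᵀ = -(L * skewJ R r * Lᵀ) := by
  simp [Matrix.transpose_mul, transpose_skewJ, Matrix.mul_assoc]

lemma rank_map_conj_skewJ_eq_iff {K : Type*} [Field K] [Fintype m] (φ : R →+* K) :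
    ((L * skewJ R r * Lᵀ).map φ).rank = 2 * r ↔ (L.map φ).rank = 2 * r := by
  have := rank_conj_eq_card_iff (A := L.map φ) (Q := skewJ K r)
  simpa [Matrix.map_mul, map_skewJ, ← Matrix.transpose_map, rank_skewJ] using this

end SkewJ

section Factorization

variable {R K m : Type*} [CommRing R] [Field K] {d : ℤ} {r : ℕ}

lemma HasHyperbolicForm.exists_antitone {e : m → ℤ} {Q : Matrix m m R[X]}
    (hQ : HasHyperbolicForm e d r Q) :
    ∃ (f : Fin r → ℤ) (u w : Matrix m (Fin r) R[X]), Antitone f ∧ WeightedDegreeLE e f u ∧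
      WeightedDegreeLE e (fun k => d - f k) w ∧ (∀ k, d ≤ 2 * f k) ∧ Q = u * wᵀ - w * uᵀ := by
  obtain ⟨f, u, w, hu, hw, hf, rfl⟩ := hQ
  let τ := Tuple.sort (-f)
  refine ⟨f ∘ τ, u.submatrix id τ, w.submatrix id τ, fun k l hkl => ?_, fun i k => hu i (τ k),
    fun i k => hw i (τ k), fun k => hf (τ k), ?_⟩
  · simpa using Tuple.monotone_sort (-f) hkl
  · simp [Matrix.submatrix_mul_equiv]

lemma antitone_foldEquiv {f : Fin r → ℤ} (hf : Antitone f) (hfd : ∀ k, d ≤ 2 * f k) :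
    Antitone (Sum.elim f (fun k => d - f k) ∘ (foldEquiv r).symm) := by
  intro i j hij
  obtain ⟨i, rfl⟩ := (foldEquiv r).surjective i
  obtain ⟨j, rfl⟩ := (foldEquiv r).surjective j
  simp only [Function.comp_apply, Equiv.symm_apply_apply]
  rw [Fin.le_def] at hij
  obtain i | i := i <;> obtain j | j := j <;>
    simp only [coe_foldEquiv_inl, coe_foldEquiv_inr, Sum.elim_inl, Sum.elim_inr] at hij ⊢
  · exact hf (Fin.le_def.2 hij)
  · have := hfd i
    have := hfd j
    omega
  · omega
  · have := hf (show j ≤ i by omega)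
    omega

lemma HasHyperbolicForm.exists_conj_skewJ {e : m → ℤ} {Q : Matrix m m R[X]}
    (hQ : HasHyperbolicForm e d r Q) :
    ∃ (L : Matrix m (Fin (2 * r)) R[X]) (F : Fin (2 * r) → ℤ), Antitone F ∧
      (∀ i, F i + F i.rev = d) ∧ WeightedDegreeLE e F L ∧ Q = L * skewJ R[X] r * Lᵀ := by
  obtain ⟨f, u, w, hf, hu, hw, hfd, rfl⟩ := hQ.exists_antitone
  refine ⟨(fromCols u w).submatrix id (foldEquiv r).symm,
    Sum.elim f (fun k => d - f k) ∘ (foldEquiv r).symm, antitone_foldEquiv hf hfd,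
    fun i => ?_, fun i j => ?_, (conj_skewJ_fromCols u w).symm⟩
  · obtain ⟨k | k, rfl⟩ := (foldEquiv r).surjective i
    · simp [rev_foldEquiv_inl]
    · simp [Fin.rev_eq_iff.2 (rev_foldEquiv_inl k).symm]
  · obtain ⟨k | k, rfl⟩ := (foldEquiv r).surjective j
    · simpa using hu i k
    · simpa using hw i k

lemma WeightedDegreeLE.conj_skewJ {L : Matrix m (Fin (2 * r)) R[X]} {F : Fin (2 * r) → ℤ}
    (hF : ∀ i, F i + F i.rev = d) (hL : WeightedDegreeLE 0 F L) :
    WeightedDegreeLE 0 (fun _ => d) (L * skewJ R[X] r * Lᵀ) :=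
  hL.conj (weightedDegreeLE_skewJ hF)

lemma rank_leadingMatrix_conj_skewJ_eq_iff [Fintype m] {L : Matrix m (Fin (2 * r)) K[X]}
    {F : Fin (2 * r) → ℤ} (hF : ∀ i, F i + F i.rev = d) (hL : WeightedDegreeLE 0 F L) :
    (leadingMatrix 0 (fun _ => d) (L * skewJ K[X] r * Lᵀ)).rank = 2 * r ↔
      (leadingMatrix 0 F L).rank = 2 * r := by
  rw [leadingMatrix_conj hL (weightedDegreeLE_skewJ hF), leadingMatrix_skewJ hF]
  have := rank_conj_eq_card_iff (A := leadingMatrix 0 F L) (Q := skewJ K r)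
  simpa [rank_skewJ] using this

end Factorization

section MinimalBasis

variable {R K m : Type*} [CommRing R] [Field K] [Fintype m] {k : ℕ}

/-- The rank of a polynomial matrix over the field of rational functions, for an arbitrary
coefficient field. -/
noncomputable def normalRank {n : Type*} [Fintype n] (P : Matrix m n K[X]) : ℕ :=
  (P.map (algebraMap K[X] (RatFunc K))).rank

/-- The largest degree of an entry of the `j`-th column, for an arbitrary coefficient ring; it is
zero for a zero column. -/
noncomputable def colDegree (L : Matrix m (Fin k) R[X]) (j : Fin k) : ℕ :=
  Finset.univ.sup fun i => (L i j).natDegree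

/-- The high-order coefficient matrix, collecting the coefficients of the column degrees, for an
arbitrary coefficient ring. -/
noncomputable def highCoeff (L : Matrix m (Fin k) R[X]) : Matrix m (Fin k) R :=
  of fun i j => (L i j).coeff (colDegree L j)

/-- Forney's criterion for minimal bases, with evaluations at the points of an arbitrary
coefficient field; it is the right notion only when that field is algebraically closed. -/
def IsMinimalBasis (L : Matrix m (Fin k) K[X]) : Prop :=
  (∀ α : K, (L.map (eval α)).rank = k) ∧ (highCoeff L).rank = k

lemma weightedDegreeLE_colDegree (L : Matrix m (Fin k) R[X]) :
    WeightedDegreeLE 0 (fun j => (colDegree L j : ℤ)) L :=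
  weightedDegreeLE_zero_natCast.2 fun i j =>
    Finset.le_sup (f := fun i => (L i j).natDegree) (Finset.mem_univ i)

lemma colDegree_eq_of_leadingMatrix_col_ne_zero {L : Matrix m (Fin k) R[X]} {F : Fin k → ℤ}
    (hL : WeightedDegreeLE 0 F L) {j : Fin k} (hj : (leadingMatrix 0 F L).col j ≠ 0) :
    (colDegree L j : ℤ) = F j := by
  obtain ⟨i, hi⟩ := Function.ne_iff.1 hj
  have intCoeff_ne_zero : intCoeff (F j) (L i j) ≠ 0 := by simpa [leadingMatrix] using hi
  have hFj : 0 ≤ F j := not_lt.1 fun h => intCoeff_ne_zero (intCoeff_of_neg h _)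
  have hLj (i : m) : L i j ∈ intDegreeLE R (F j) := by simpa using hL i j
  lift F j to ℕ using hFj with n
  rw [intCoeff_natCast] at intCoeff_ne_zero
  refine congrArg Nat.cast (le_antisymm ?_ ?_)
  · exact Finset.sup_le fun i _ => mem_intDegreeLE_natCast.1 (hLj i)
  · exact (le_natDegree_of_ne_zero intCoeff_ne_zero).trans
      (Finset.le_sup (f := fun i => (L i j).natDegree) (Finset.mem_univ i))

lemma natCast_colDegree_eq_of_rank_leadingMatrix {L : Matrix m (Fin k) K[X]} {F : Fin k → ℤ}
    (hL : WeightedDegreeLE 0 F L) (hlead : (leadingMatrix 0 F L).rank = k) :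
    (fun j => (colDegree L j : ℤ)) = F := by
  have injective : Function.Injective (leadingMatrix 0 F L).mulVec :=
    rank_eq_card_iff_mulVec_injective.1 (by simpa using hlead)
  refine funext fun j => colDegree_eq_of_leadingMatrix_col_ne_zero hL fun hj => ?_
  rw [← Matrix.mulVec_single_one, ← Matrix.mulVec_zero (leadingMatrix 0 F L)] at hj
  simpa using injective hj

lemma normalRank_eq_of_rank_eval {ι : Type*} [Finite ι] {L : Matrix ι (Fin k) K[X]} {α : K}
    (hL : (L.map (eval α)).rank = k) : normalRank L = k := by
  have le_k := Matrix.rank_le_card_width (L.map (algebraMap K[X] (RatFunc K)))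
  rw [Fintype.card_fin] at le_k
  exact le_k.antisymm <| hL.symm.trans_le <|
    rank_map_le_rank_map_of_isFractionRing (RatFunc K) (evalRingHom α) L

end MinimalBasis

end PolynomialMatrix

open PolynomialMatrix in
theorem skew_symmetric_no_eigenvalues_iff_factorization_general {K m : Type*} [Field K]
    [IsAlgClosed K] (h2 : (2 : K) ≠ 0) [Fintype m] {r d : ℕ} (hr : 0 < r) (P : Matrix m m K[X]) :
    (Pᵀ = -P ∧ (∀ i j, (P i j).natDegree ≤ d) ∧
     PolynomialMatrix.normalRank P = 2 * r ∧
     (Matrix.of fun a b => (P a b).coeff d) ≠ (0 : Matrix m m K) ∧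
     (∀ α : K, (P.map (eval α)).rank = 2 * r) ∧
     (Matrix.of fun a b => (P a b).coeff d).rank = 2 * r) ↔
    (∃ L : Matrix m (Fin (2 * r)) K[X],
      PolynomialMatrix.IsMinimalBasis L ∧
      (∀ i j : Fin (2 * r), i ≤ j →
        PolynomialMatrix.colDegree L j ≤ PolynomialMatrix.colDegree L i) ∧
      (∀ i : Fin (2 * r),
        PolynomialMatrix.colDegree L i + PolynomialMatrix.colDegree L i.rev = d) ∧
      P = L * skewJ K[X] r * Lᵀ) := by
  rw [← leadingMatrix_zero_natCast P fun _ => d]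
  constructor
  · rintro ⟨hskew, hdeg, hrank, -, heval, hlead⟩
    have hform := hasHyperbolicForm_of_no_eigenvalues h2 hskew hdeg hrank heval
      (leadingMatrix_zero_natCast P (fun _ => d) ▸ hlead)
    obtain ⟨L, F, hanti, hF, hL, rfl⟩ := hform.exists_conj_skewJ
    rw [rank_leadingMatrix_conj_skewJ_eq_iff hF hL] at hlead
    obtain rfl := natCast_colDegree_eq_of_rank_leadingMatrix hL hlead
    refine ⟨L, ⟨fun α => (rank_map_conj_skewJ_eq_iff (evalRingHom α)).1 (heval α), ?_⟩,
      fun i j hij => Nat.cast_le.1 (hanti hij), fun i => Nat.cast_injective (hF i), rfl⟩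
    rwa [leadingMatrix_zero_natCast] at hlead
  · rintro ⟨L, ⟨heval, hhigh⟩, -, hsum, rfl⟩
    have hF (i : Fin (2 * r)) :
        (PolynomialMatrix.colDegree L i : ℤ) + PolynomialMatrix.colDegree L i.rev = d := by
      exact_mod_cast hsum i
    have hL := weightedDegreeLE_colDegree L
    have hlead := (rank_leadingMatrix_conj_skewJ_eq_iff hF hL).2
      (by rwa [leadingMatrix_zero_natCast])
    refine ⟨transpose_conj_skewJ, weightedDegreeLE_zero_natCast.1 (hL.conj_skewJ hF),
      (rank_map_conj_skewJ_eq_iff _).2 (normalRank_eq_of_rank_eval (heval 0)), fun h => ?_,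
      fun α => (rank_map_conj_skewJ_eq_iff (evalRingHom α)).2 (heval α), hlead⟩
    rw [h, Matrix.rank_zero] at hlead
    omega

/-- Characterization: `P` is skew-symmetric of grade `d`, with normal rank exactly `2r`,
degree exactly `d`, and no (finite or infinite) eigenvalues, if and only if
`P = L J₂ᵣ Lᵀ` for a minimal basis `L` with nonincreasing column degrees satisfying
`deg(Lᵢ) + deg(L₂ᵣ₋ᵢ₊₁) = d`. -/
theorem skew_symmetric_no_eigenvalues_iff_factorization (m r d : ℕ)
    (hd : 1 ≤ d) (h2 : 2 ≤ 2 * r) (hrm : 2 * r ≤ m - 1)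
    (P : Matrix (Fin m) (Fin m) (Polynomial ℂ)) :
    (Pᵀ = -P ∧ (∀ i j, (P i j).natDegree ≤ d) ∧
     normalRank P = 2 * r ∧
     (Matrix.of fun a b => (P a b).coeff d) ≠ (0 : Matrix (Fin m) (Fin m) ℂ) ∧
     (∀ α : ℂ, (P.map (Polynomial.eval α)).rank = 2 * r) ∧
     (Matrix.of fun a b => (P a b).coeff d).rank = 2 * r) ↔
    (∃ L : Matrix (Fin m) (Fin (2 * r)) (Polynomial ℂ),
      IsMinimalBasis L ∧
      (∀ i j : Fin (2 * r), i ≤ j → colDegree L j ≤ colDegree L i) ∧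
      (∀ i : Fin (2 * r), colDegree L i + colDegree L i.rev = d) ∧
      P = L * Jmat r * Lᵀ) := by
  exact skew_symmetric_no_eigenvalues_iff_factorization_general two_ne_zero (by omega) P
end

section
/- Let m, r, d be integers with d ≥ 1 and 2 ≤ 2r ≤ m−1, and let d₁, …, d_r be integers with d ≥ dᵢ ≥ d/2 for all i. Then every matrix polynomial in A(d₁, …, d_r) is the coefficientwise limit of a sequence of matrix polynomials in A(⌈d/2⌉, …, ⌈d/2⌉); that is, A(d₁, …, d_r) is contained in the closure of A(⌈d/2⌉, …, ⌈d/2⌉). -/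
open Polynomial Matrix

/-- The set `A(d₁, …, d_r)`: m×m matrix polynomials of the form `L J₂ᵣ Lᵀ`, where the
`i`-th column of `L` has degree exactly `dᵢ` and the `(2r−i+1)`-th column has degree
exactly `d − dᵢ`, for `i = 1, …, r`. -/
noncomputable def Aset (m r d : ℕ) (ds : Fin r → ℕ) :
    Set (Matrix (Fin m) (Fin m) (Polynomial ℂ)) :=
  {P | ∃ L : Matrix (Fin m) (Fin (2 * r)) (Polynomial ℂ),
    (∀ i : Fin r,
      colDegree L (Fin.castLE (by omega) i) = ds i ∧
      colDegree L (Fin.castLE (by omega) i).rev = d - ds i) ∧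
    P = L * Jmat r * Lᵀ}

/-- The tuple of coefficient matrices of a matrix polynomial of grade `d`. -/
noncomputable def coeffTuple (m d : ℕ) (P : Matrix (Fin m) (Fin m) (Polynomial ℂ)) :
    Fin (d + 1) → Matrix (Fin m) (Fin m) ℂ :=
  fun i => Matrix.of fun a b => (P a b).coeff (i : ℕ)

/-!
Pairing the `i`-th column `u` of `L` with its mirror column `v` writes `L J₂ᵣ Lᵀ` as the sum over
`i` of the wedges `u vᵀ - v uᵀ`, so a set `A(d₁, …, d_r)` is a Minkowski sum of sets of wedges and
it suffices to degenerate a single wedge. Let `u` and `v` have degrees `a + k` and `b`, where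
`b ≤ a`, put `s = a - b`, and divide with remainder: `u = ρ + X ^ s w`. For `ε ≠ 0` the wedge of
`u` and `v + ε w` does not change when a multiple of the second vector is subtracted from the
first, so it is also the wedge of `u - ε⁻¹ X ^ s (v + ε w) = ρ - ε⁻¹ X ^ s v`, of degree `a`, and
`v + ε w`, of degree `b + k`. As `ε → 0` it tends to the wedge of `u` and `v`. The degree `a` is
lost only if `v = 0`, and then the wedge is `0`, which is also the wedge of the vectors with all
entries equal to `X ^ a` and to `X ^ (b + k)`.
-/

open Filter Topology Pointwise

lemma sum_subset_closure_sum {κ V : Type*} [Fintype κ] [AddCommMonoid V] [TopologicalSpace V]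
    [ContinuousAdd V] {S T : κ → Set V} (h : ∀ k, S k ⊆ closure (T k)) :
    ∑ k, S k ⊆ closure (∑ k, T k) := by
  rw [← Set.image_fintype_sum_pi S, ← Set.image_fintype_sum_pi T]
  calc (fun f : κ → V => ∑ k, f k) '' Set.univ.pi S
      ⊆ (fun f : κ → V => ∑ k, f k) '' closure (Set.univ.pi T) := by
        rw [closure_pi_set]
        exact Set.image_mono (Set.pi_mono fun k _ => h k)
    _ ⊆ closure ((fun f : κ → V => ∑ k, f k) '' Set.univ.pi T) :=
        image_closure_subset_closure_image (by fun_prop)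

lemma natDegree_add_X_pow_mul {R : Type*} [Semiring R] {s : ℕ} {p q : R[X]}
    (hp : p.degree < s) (hq : q ≠ 0) : (p + X ^ s * q).natDegree = s + q.natDegree := by
  have : Nontrivial R := Polynomial.nontrivial_iff.mp (nontrivial_of_ne q 0 hq)
  have hlt : p.degree < (X ^ s * q).degree := by
    rw [X_pow_mul, degree_mul_X_pow, degree_eq_natDegree hq]
    exact hp.trans_le (by exact_mod_cast Nat.le_add_left s _)
  rw [natDegree_add_eq_right_of_degree_lt hlt, natDegree_X_pow_mul _ hq, add_comm]

section VecDegree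

variable {ι R : Type*} [Fintype ι]

/-- The degree of a vector of polynomials, i.e. the maximum of the degrees of its entries. As for
`natDegree`, the zero vector has degree `0`. It is `colDegree` detached from a matrix. -/
noncomputable def vecDegree [Semiring R] (u : ι → R[X]) : ℕ :=
  Finset.univ.sup fun i => (u i).natDegree

section Semiring

variable [Semiring R]

lemma natDegree_le_vecDegree (u : ι → R[X]) (i : ι) : (u i).natDegree ≤ vecDegree u :=
  Finset.le_sup (f := fun i => (u i).natDegree) (Finset.mem_univ i)

lemma vecDegree_le_iff {u : ι → R[X]} {n : ℕ} : vecDegree u ≤ n ↔ ∀ i, (u i).natDegree ≤ n := by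
  simp [vecDegree]

lemma exists_ne_zero_natDegree_eq_vecDegree {u : ι → R[X]} (hu : u ≠ 0) :
    ∃ i, u i ≠ 0 ∧ (u i).natDegree = vecDegree u := by
  obtain ⟨j, hj⟩ := Function.ne_iff.mp hu
  obtain ⟨i, -, hi⟩ := Finset.exists_mem_eq_sup Finset.univ ⟨j, Finset.mem_univ j⟩
    fun i => (u i).natDegree
  by_cases hui : u i = 0
  · have hzero : vecDegree u = 0 := by rw [vecDegree, hi, hui, natDegree_zero]
    exact ⟨j, hj, Nat.le_antisymm (natDegree_le_vecDegree u j) (by simp [hzero])⟩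
  · exact ⟨i, hui, hi.symm⟩

lemma ne_zero_of_vecDegree_pos {u : ι → R[X]} (hu : 0 < vecDegree u) : u ≠ 0 := by
  rintro rfl
  simp [vecDegree] at hu

lemma vecDegree_add_eq_right {u v : ι → R[X]} (h : vecDegree u < vecDegree v) :
    vecDegree (u + v) = vecDegree v := by
  refine le_antisymm (vecDegree_le_iff.mpr fun i => ?_) ?_
  · exact natDegree_add_le_of_degree_le ((natDegree_le_vecDegree u i).trans h.le)
      (natDegree_le_vecDegree v i)
  · obtain ⟨i, -, hi⟩ := exists_ne_zero_natDegree_eq_vecDegree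
      (ne_zero_of_vecDegree_pos (Nat.zero_lt_of_lt h))
    have hlt : (u i).natDegree < (v i).natDegree := hi ▸ (natDegree_le_vecDegree u i).trans_lt h
    rw [← hi, ← natDegree_add_eq_right_of_natDegree_lt hlt]
    exact natDegree_le_vecDegree (u + v) i

lemma vecDegree_const [Nonempty ι] (p : R[X]) : vecDegree (fun _ : ι => p) = p.natDegree :=
  Finset.sup_const Finset.univ_nonempty _

lemma vecDegree_add_X_pow_smul {s : ℕ} {u v : ι → R[X]} (hu : ∀ i, (u i).degree < s)
    (hv : v ≠ 0) : vecDegree (u + (X ^ s : R[X]) • v) = s + vecDegree v := by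
  refine le_antisymm (vecDegree_le_iff.mpr fun i => ?_) ?_
  · by_cases hvi : v i = 0
    · simpa [hvi] using (natDegree_le_of_degree_le (hu i).le).trans (Nat.le_add_right s _)
    · exact (natDegree_add_X_pow_mul (hu i) hvi).trans_le
        (Nat.add_le_add_left (natDegree_le_vecDegree v i) s)
  · obtain ⟨i, hvi, hi⟩ := exists_ne_zero_natDegree_eq_vecDegree hv
    rw [← hi, ← natDegree_add_X_pow_mul (hu i) hvi]
    exact natDegree_le_vecDegree (u + (X ^ s : R[X]) • v) i

end Semiring

lemma vecDegree_divByMonic [Ring R] (u : ι → R[X]) {g : R[X]} (hg : g.Monic) :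
    vecDegree (fun i => u i /ₘ g) = vecDegree u - g.natDegree := by
  simp only [vecDegree, natDegree_divByMonic _ hg]
  exact (Finset.apply_sup_eq_sup_comp_of_linearOrder (· - g.natDegree)
    (fun _ _ h => Nat.sub_le_sub_right h _) (Nat.zero_sub _)).symm

lemma vecDegree_smul [Semiring R] [IsDomain R] {c : R} (hc : c ≠ 0) (u : ι → R[X]) :
    vecDegree (c • u) = vecDegree u := by
  simp only [vecDegree, Pi.smul_apply, natDegree_smul _ hc]

lemma vecDegree_add_smul_divByMonic [Ring R] [IsDomain R] {u v : ι → R[X]} {g : R[X]}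
    (hg : g.Monic) (h : vecDegree v < vecDegree u - g.natDegree) {c : R} (hc : c ≠ 0) :
    vecDegree (v + c • fun i => u i /ₘ g) = vecDegree u - g.natDegree := by
  have hquot : vecDegree (c • fun i => u i /ₘ g) = vecDegree u - g.natDegree := by
    rw [vecDegree_smul hc, vecDegree_divByMonic u hg]
  rw [vecDegree_add_eq_right (h.trans_eq hquot.symm), hquot]

end VecDegree

section Wedge

variable {ι A : Type*} [CommRing A]

/-- The skew-symmetric matrix `u vᵀ - v uᵀ` of two vectors, the building block of `L J₂ᵣ Lᵀ`. -/
def wedge (u v : ι → A) : Matrix ι ι A :=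
  vecMulVec u v - vecMulVec v u

lemma wedge_apply (u v : ι → A) (i j : ι) : wedge u v i j = u i * v j - v i * u j := rfl

lemma wedge_zero_right (u : ι → A) : wedge u 0 = 0 := by
  simp [wedge]

lemma wedge_const_const (p q : A) : wedge (fun _ : ι => p) (fun _ => q) = 0 := by
  ext i j
  simp [wedge_apply, mul_comm]

lemma wedge_sub_smul_left (u v : ι → A) (p : A) : wedge (u - p • v) v = wedge u v := by
  ext i j
  simp only [wedge_apply, Pi.sub_apply, Pi.smul_apply, smul_eq_mul]
  ring

lemma wedge_add_smul_right {S : Type*} [CommSemiring S] [Algebra S A] (u v w : ι → A) (c : S) :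
    wedge u (v + c • w) = wedge u v + c • wedge u w := by
  simp only [wedge, vecMulVec_add, add_vecMulVec, vecMulVec_smul, smul_vecMulVec, smul_sub]
  abel

lemma fromCols_mul_fromBlocks_mul_transpose {κ : Type*} [Fintype κ] [DecidableEq κ]
    (U V : Matrix ι κ A) :
    fromCols U V * (fromBlocks 0 1 (-1) 0 : Matrix (κ ⊕ κ) (κ ⊕ κ) A) * (fromCols U V)ᵀ =
      ∑ k, wedge (U.col k) (V.col k) := by
  have hblocks : fromCols U V * (fromBlocks 0 1 (-1) 0 : Matrix (κ ⊕ κ) (κ ⊕ κ) A) =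
      fromCols (-V) U := by
    simp [fromCols_mul_fromBlocks]
  rw [hblocks, transpose_fromCols, fromCols_mul_fromRows]
  ext i j
  simp [Matrix.sum_apply, wedge_apply, Matrix.mul_apply, neg_add_eq_sub]

end Wedge

lemma exists_vecDegree_eq_wedge_eq {ι K : Type*} [Fintype ι] [Field K] (s : ℕ) (u : ι → K[X])
    {v : ι → K[X]} (hv : v ≠ 0) {ε : K} (hε : ε ≠ 0) :
    ∃ u' : ι → K[X], vecDegree u' = s + vecDegree v ∧
      wedge u' (v + ε • fun i => u i /ₘ X ^ s) = wedge u (v + ε • fun i => u i /ₘ X ^ s) := by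
  let w : ι → K[X] := fun i => u i /ₘ X ^ s
  let ρ : ι → K[X] := fun i => u i %ₘ X ^ s
  have hρ (i : ι) : (ρ i).degree < s := by
    simpa using degree_modByMonic_lt (u i) (monic_X_pow s)
  have hc : -ε⁻¹ ≠ 0 := neg_ne_zero.mpr (inv_ne_zero hε)
  have hshear : ρ + (X ^ s : K[X]) • -ε⁻¹ • v = u - (ε⁻¹ • X ^ s : K[X]) • (v + ε • w) := by
    ext1 i
    have hdiv : ρ i + X ^ s * w i = u i := modByMonic_add_div (u i) (X ^ s)
    have hCε : C ε⁻¹ * C ε = (1 : K[X]) := by rw [← C_mul, inv_mul_cancel₀ hε, C_1]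
    simp only [Pi.add_apply, Pi.sub_apply, Pi.smul_apply, smul_eq_mul, smul_eq_C_mul, C_neg]
    linear_combination hdiv + X ^ s * w i * hCε
  refine ⟨ρ + (X ^ s : K[X]) • -ε⁻¹ • v, ?_, ?_⟩
  · rw [vecDegree_add_X_pow_smul hρ (smul_ne_zero hc hv), vecDegree_smul hc]
  · rw [hshear]
    exact wedge_sub_smul_left u (v + ε • w) _

section Columns

/-- The pairing of the columns of an `m × 2r` matrix: `inl i` is the `i`-th index and `inr i` its
mirror image, so that `Jmat r` takes block form. -/
def mirrorEquiv (r : ℕ) : Fin r ⊕ Fin r ≃ Fin (2 * r) :=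
  ((Equiv.sumCongr (Equiv.refl _) Fin.revPerm).trans finSumFinEquiv).trans
    (finCongr (two_mul r).symm)

lemma mirrorEquiv_inl {r : ℕ} (i : Fin r) :
    mirrorEquiv r (Sum.inl i) = Fin.castLE (by omega) i := rfl

lemma mirrorEquiv_inr {r : ℕ} (i : Fin r) :
    mirrorEquiv r (Sum.inr i) = (Fin.castLE (by omega) i : Fin (2 * r)).rev := by
  ext
  simp only [mirrorEquiv, Equiv.trans_apply, Equiv.sumCongr_apply, Equiv.coe_refl, Sum.map_inr,
    Fin.revPerm_apply, finSumFinEquiv_apply_right, Fin.natAdd_eq_addNat, finCongr_apply,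
    Fin.val_cast, Fin.val_addNat, Fin.val_rev, Fin.val_castLE]
  omega

lemma Jmat_submatrix_mirrorEquiv (r : ℕ) :
    (Jmat r).submatrix (mirrorEquiv r) (mirrorEquiv r) = fromBlocks 0 1 (-1) 0 := by
  ext1 (i | i) (j | j) <;>
    simp only [Jmat, submatrix_apply, of_apply, mirrorEquiv_inl, mirrorEquiv_inr, Fin.val_rev,
      Fin.val_castLE, fromBlocks_apply₁₁, fromBlocks_apply₁₂, fromBlocks_apply₂₁,
      fromBlocks_apply₂₂, Matrix.zero_apply, Matrix.neg_apply, Matrix.one_apply, Fin.ext_iff] <;>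
    split_ifs <;> first | rfl | omega | simp

lemma mul_Jmat_mul_transpose {m r : ℕ} (L : Matrix (Fin m) (Fin (2 * r)) ℂ[X]) :
    L * Jmat r * Lᵀ =
      ∑ i, wedge (L.col (mirrorEquiv r (Sum.inl i))) (L.col (mirrorEquiv r (Sum.inr i))) := by
  let M := L.submatrix id (mirrorEquiv r)
  calc L * Jmat r * Lᵀ
      = M * (Jmat r).submatrix (mirrorEquiv r) (mirrorEquiv r) * Mᵀ := by
        simp only [M, transpose_submatrix, submatrix_mul_equiv, submatrix_id_id]
    _ = ∑ i, wedge (M.toCols₁.col i) (M.toCols₂.col i) := by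
        rw [Jmat_submatrix_mirrorEquiv, ← fromCols_mul_fromBlocks_mul_transpose, fromCols_toCols]

end Columns

section CoeffTuple

variable {m d : ℕ}

lemma coeffTuple_zero : coeffTuple m d 0 = 0 := by
  ext
  simp [coeffTuple]

lemma coeffTuple_sum {κ : Type*} (s : Finset κ) (P : κ → Matrix (Fin m) (Fin m) ℂ[X]) :
    coeffTuple m d (∑ k ∈ s, P k) = ∑ k ∈ s, coeffTuple m d (P k) := by
  ext
  simp [coeffTuple, Matrix.sum_apply]

lemma coeffTuple_add_smul (P Q : Matrix (Fin m) (Fin m) ℂ[X]) (c : ℂ) :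
    coeffTuple m d (P + c • Q) = coeffTuple m d P + c • coeffTuple m d Q := by
  ext
  simp [coeffTuple]

lemma tendsto_coeffTuple_add_smul (P Q : Matrix (Fin m) (Fin m) ℂ[X]) :
    Tendsto (fun ε : ℂ => coeffTuple m d (P + ε • Q)) (𝓝 0) (𝓝 (coeffTuple m d P)) := by
  simp only [coeffTuple_add_smul]
  exact Continuous.tendsto' (by fun_prop) _ _ (by simp)

end CoeffTuple

/-- The wedges of two vectors of degrees exactly `a` and `b`, as tuples of coefficient matrices of
grade `d`. For `a + b = d` this is the set `A(a)` of the case `r = 1`. -/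
def wedgeSet (m d a b : ℕ) : Set (Fin (d + 1) → Matrix (Fin m) (Fin m) ℂ) :=
  Set.image2 (fun u v => coeffTuple m d (wedge u v)) {u | vecDegree u = a} {v | vecDegree v = b}

lemma coeffTuple_image_Aset (m r d : ℕ) (ds : Fin r → ℕ) :
    coeffTuple m d '' Aset m r d ds = ∑ i, wedgeSet m d (ds i) (d - ds i) := by
  ext x
  rw [Set.mem_fintype_sum]
  constructor
  · rintro ⟨_, ⟨L, hL, rfl⟩, rfl⟩
    refine ⟨_, fun i => ?_, by rw [mul_Jmat_mul_transpose, coeffTuple_sum]⟩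
    refine Set.mem_image2_of_mem (hL i).1 ?_
    rw [mirrorEquiv_inr]
    exact (hL i).2
  · rintro ⟨y, hy, rfl⟩
    choose u hu v hv hy using hy
    let L : Matrix (Fin m) (Fin (2 * r)) ℂ[X] :=
      (of fun k => Sum.elim u v ((mirrorEquiv r).symm k))ᵀ
    have hinl (i : Fin r) : L.col (mirrorEquiv r (Sum.inl i)) = u i := by ext1; simp [L]
    have hinr (i : Fin r) : L.col (mirrorEquiv r (Sum.inr i)) = v i := by ext1; simp [L]
    refine ⟨_, ⟨L, fun i => ⟨?_, ?_⟩, rfl⟩, ?_⟩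
    · exact (congrArg vecDegree (hinl i)).trans (hu i)
    · rw [← mirrorEquiv_inr]
      exact (congrArg vecDegree (hinr i)).trans (hv i)
    · simp only [mul_Jmat_mul_transpose, coeffTuple_sum, hinl, hinr, hy]

lemma zero_mem_wedgeSet {m : ℕ} [NeZero m] (d a b : ℕ) : 0 ∈ wedgeSet m d a b :=
  ⟨fun _ => X ^ a, by simp [vecDegree_const], fun _ => X ^ b, by simp [vecDegree_const],
    by simp only [wedge_const_const, coeffTuple_zero]⟩

lemma coeffTuple_wedge_add_smul_mem_wedgeSet {m a b k : ℕ} (d : ℕ) (hba : b ≤ a) (hk : 0 < k)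
    {u v : Fin m → ℂ[X]} (hu : vecDegree u = a + k) (hv : vecDegree v = b) (hv₀ : v ≠ 0)
    {ε : ℂ} (hε : ε ≠ 0) :
    coeffTuple m d (wedge u (v + ε • fun i => u i /ₘ X ^ (a - b))) ∈ wedgeSet m d a (b + k) := by
  have hdiff : vecDegree u - (X ^ (a - b) : ℂ[X]).natDegree = b + k := by
    rw [hu, natDegree_X_pow]
    omega
  have hlt : vecDegree v < vecDegree u - (X ^ (a - b) : ℂ[X]).natDegree := by omega
  have hright := vecDegree_add_smul_divByMonic (monic_X_pow (a - b)) hlt hε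
  obtain ⟨u', hleft, hwedge⟩ := exists_vecDegree_eq_wedge_eq (a - b) u hv₀ hε
  rw [hv, Nat.sub_add_cancel hba] at hleft
  exact ⟨u', hleft, _, hright.trans hdiff, congrArg (coeffTuple m d) hwedge⟩

lemma wedgeSet_subset_closure {m a b : ℕ} (d k : ℕ) (hba : b ≤ a) :
    wedgeSet m d (a + k) b ⊆ closure (wedgeSet m d a (b + k)) := by
  obtain rfl | hk := k.eq_zero_or_pos
  · exact subset_closure
  rintro _ ⟨u, hu, v, hv, rfl⟩
  obtain rfl | hv₀ := eq_or_ne v 0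
  · have hu_pos : 0 < vecDegree u := (Nat.add_pos_right a hk).trans_eq hu.symm
    obtain ⟨i, -⟩ := Function.ne_iff.mp (ne_zero_of_vecDegree_pos hu_pos)
    have : NeZero m := ⟨by rintro rfl; exact i.elim0⟩
    simpa only [wedge_zero_right, coeffTuple_zero] using subset_closure (zero_mem_wedgeSet d a _)
  · have hlim := tendsto_coeffTuple_add_smul (d := d) (wedge u v)
      (wedge u fun i => u i /ₘ X ^ (a - b))
    refine mem_closure_of_tendsto (hlim.mono_left (nhdsWithin_le_nhds (s := {0}ᶜ))) ?_
    filter_upwards [self_mem_nhdsWithin] with ε hε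
    rw [← wedge_add_smul_right]
    exact coeffTuple_wedge_add_smul_mem_wedgeSet d hba hk hu hv hv₀ hε

theorem Aset_subset_closure_Aset_ceil_general (m r d : ℕ) (ds es : Fin r → ℕ)
    (hds : ∀ i, ds i ≤ d) (hes : ∀ i, es i ∈ Set.Icc (d - ds i) (ds i)) :
    coeffTuple m d '' Aset m r d ds ⊆ closure (coeffTuple m d '' Aset m r d es) := by
  rw [coeffTuple_image_Aset, coeffTuple_image_Aset]
  refine sum_subset_closure_sum fun i => ?_
  obtain ⟨hlow, hhigh⟩ := hes i
  have hle := wedgeSet_subset_closure (m := m) d (ds i - es i) hlow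
  rwa [Nat.add_sub_cancel' hhigh, tsub_add_tsub_cancel (hds i) hhigh] at hle

/-- `A(d₁, …, d_r)` is contained in the closure (with respect to coefficientwise
convergence) of `A(⌈d/2⌉, …, ⌈d/2⌉)`. -/
theorem Aset_subset_closure_Aset_ceil (m r d : ℕ)
    (hd : 1 ≤ d) (h2 : 2 ≤ 2 * r) (hrm : 2 * r ≤ m - 1)
    (ds : Fin r → ℕ) (hds : ∀ i, ds i ≤ d ∧ d ≤ 2 * ds i) :
    coeffTuple m d '' Aset m r d ds ⊆
      closure (coeffTuple m d '' Aset m r d fun _ => (d + 1) / 2) := by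
  exact Aset_subset_closure_Aset_ceil_general m r d ds _ (fun i => (hds i).1)
    fun i => by grind
end

section
/- Let A, B ∈ Matrix (Fin m) (Fin m) ℂ be skew-symmetric matrices (Aᵀ = −A, Bᵀ = −B). Then there exist an invertible matrix S ∈ Matrix (Fin m) (Fin m) ℂ, a finite family of canonical skew-symmetric pencil blocks, each of one of the three forms H_h(μ) (for some μ ∈ ℂ and h ≥ 1), K_k (for some k ≥ 1), or M_k (for some k ≥ 0), and a bijection between Fin m and the disjoint union of the block index sets, such that the congruent pencil Sᵀ A S − λ Sᵀ B S equals (after reindexing by this bijection) the block-diagonal pencil formed by these blocks. Here: H_h(μ) is the 2h×2h pencil [[0, J_h(μ)], [−J_h(μ)ᵀ, 0]] − λ[[0, I_h], [−I_h, 0]], where J_h(μ) is the h×h upper Jordan block with eigenvalue μ; K_k is the 2k×2k pencil [[0, I_k], [−I_k, 0]] − λ[[0, J_k(0)], [−J_k(0)ᵀ, 0]]; and M_k is the (2k+1)×(2k+1) pencil [[0, F_k], [−F_kᵀ, 0]] − λ[[0, G_k], [−G_kᵀ, 0]], where F_k and G_k are the k×(k+1) matrices with ones on the superdiagonal (resp.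 the main diagonal) and zeros elsewhere. -/
open Matrix

/-- The h×h upper Jordan block with eigenvalue μ. -/
def jordanBlock (h : ℕ) (μ : ℂ) : Matrix (Fin h) (Fin h) ℂ :=
  Matrix.of fun i j => if j = i then μ else if (j : ℕ) = (i : ℕ) + 1 then 1 else 0

/-- The k×(k+1) matrix `F_k` with ones on the superdiagonal. -/
def Fmat (k : ℕ) : Matrix (Fin k) (Fin (k + 1)) ℂ :=
  Matrix.of fun i j => if (j : ℕ) = (i : ℕ) + 1 then 1 else 0

/-- The k×(k+1) matrix `G_k` with ones on the main diagonal. -/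
def Gmat (k : ℕ) : Matrix (Fin k) (Fin (k + 1)) ℂ :=
  Matrix.of fun i j => if (j : ℕ) = (i : ℕ) then 1 else 0

/-- Canonical blocks for skew-symmetric matrix pencils under congruence:
`H h μ` (finite eigenvalue μ), `K k` (infinite eigenvalue), `M k` (singular blocks). -/
inductive SkewBlock : Type
  | H : ℕ → ℂ → SkewBlock
  | K : ℕ → SkewBlock
  | M : ℕ → SkewBlock

/-- Validity of the block parameters: `h ≥ 1` for `H`, `k ≥ 1` for `K`, `k ≥ 0` for `M`. -/
def SkewBlock.valid : SkewBlock → Prop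
  | .H h _ => 1 ≤ h
  | .K k => 1 ≤ k
  | .M _ => True

/-- The size of a canonical block: `2h` for `H h μ`, `2k` for `K k`, `2k+1` for `M k`. -/
def SkewBlock.size : SkewBlock → ℕ
  | .H h _ => h + h
  | .K k => k + k
  | .M k => k + (k + 1)

/-- The constant (λ⁰) part of a canonical block pencil `X − λ Y`. -/
noncomputable def SkewBlock.matA : (b : SkewBlock) → Matrix (Fin b.size) (Fin b.size) ℂ
  | .H h μ => (Matrix.fromBlocks 0 (jordanBlock h μ) (-(jordanBlock h μ)ᵀ) 0).submatrix
      finSumFinEquiv.symm finSumFinEquiv.symm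
  | .K k => (Matrix.fromBlocks 0 (1 : Matrix (Fin k) (Fin k) ℂ) (-1) 0).submatrix
      finSumFinEquiv.symm finSumFinEquiv.symm
  | .M k => (Matrix.fromBlocks 0 (Fmat k) (-(Fmat k)ᵀ) 0).submatrix
      finSumFinEquiv.symm finSumFinEquiv.symm

/-- The coefficient of λ (with sign convention `X − λ Y`, this is `Y`) of a canonical
block pencil. -/
noncomputable def SkewBlock.matB : (b : SkewBlock) → Matrix (Fin b.size) (Fin b.size) ℂ
  | .H h _ => (Matrix.fromBlocks 0 (1 : Matrix (Fin h) (Fin h) ℂ) (-1) 0).submatrix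
      finSumFinEquiv.symm finSumFinEquiv.symm
  | .K k => (Matrix.fromBlocks 0 (jordanBlock k 0) (-(jordanBlock k 0)ᵀ) 0).submatrix
      finSumFinEquiv.symm finSumFinEquiv.symm
  | .M k => (Matrix.fromBlocks 0 (Gmat k) (-(Gmat k)ᵀ) 0).submatrix
      finSumFinEquiv.symm finSumFinEquiv.symm

/-!
By induction on the dimension it suffices to treat a pair `a, b` of alternating forms that admits
no nontrivial orthogonal splitting. On such an indecomposable pair every operator that is
self-adjoint for both forms is nilpotent or bijective, because its Fitting decomposition is
orthogonal.

If some form `a - r b` is nondegenerate, then so is `a` or `b`. Say `b` is, and let `μ` be an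
eigenvalue of `b⁻¹ a`: then `T = b⁻¹ (a - μ b)` is nilpotent, and a Jordan chain of `T` of maximal
length together with a chain dual to it under `b` gives the block `H_h(μ)`. If only `a` is
nondegenerate, exchanging the two forms gives `K_k`.

If every form `a - r b` is degenerate, the pencil kills a nonzero vector polynomial. The
coefficients of one of minimal degree are dual to a second chain, which exists because, by
skew-symmetry, the cokernel of the corresponding linear system is dual to the space of polynomial
kernel vectors of smaller degree. This gives `M_k`.

In all cases the two dual chains span an orthogonal summand, hence the whole space, and each of
them is isotropic for both forms.
-/

open LinearMap (BilinForm)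
open LinearMap.BilinForm (toMatrix)
open Module (Basis Dual)

variable {K V : Type*} [Field K] [AddCommGroup V] [Module K V]

/-! ### Orthogonal splittings -/

-- `b (x i) (x j)` depends on `i + j` only, so one may move the indices towards each other until
-- they differ by at most one.
theorem isotropic_of_chain {a b : BilinForm K V} (ha : a.IsAlt) (hb : b.IsAlt) {x : ℕ → V} {n : ℕ}
    (hx : ∀ i, i + 1 < n → a (x i) = b (x (i + 1))) {i j : ℕ} (hi : i < n) (hj : j < n) :
    a (x i) (x j) = 0 ∧ b (x i) (x j) = 0 := by
  have shift (i j : ℕ) (hi : i + 1 < n) (hj : j + 1 < n) :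
      b (x i) (x (j + 1)) = b (x (i + 1)) (x j) := by
    rw [← hx i hi, ← hb.neg_eq, ← hx j hj, ha.neg_eq]
  have gap (d : ℕ) : ∀ i, i + d < n → b (x i) (x (i + d)) = 0 := by
    induction d using Nat.twoStepInduction with
    | zero => exact fun i _ ↦ hb.self_eq_zero (x i)
    | one => exact fun i h ↦ by rw [← hb.neg_eq, ← hx i h, ha.self_eq_zero, neg_zero]
    | more d ih _ =>
      intro i h
      rw [← add_assoc, shift i (i + d + 1) (by omega) (by omega), add_right_comm]
      exact ih (i + 1) (by omega)
  have isotropic_b (i j : ℕ) (hi : i < n) (hj : j < n) : b (x i) (x j) = 0 := by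
    rcases le_total i j with h | h
    · simpa only [Nat.add_sub_cancel' h] using gap (j - i) i (by omega)
    · rw [← hb.neg_eq, neg_eq_zero]
      simpa only [Nat.add_sub_cancel' h] using gap (i - j) j (by omega)
  refine ⟨?_, isotropic_b i j hi hj⟩
  rcases lt_trichotomy i j with h | rfl | h
  · rw [hx i (by omega), isotropic_b (i + 1) j (by omega) hj]
  · exact ha.self_eq_zero (x i)
  · rw [← ha.neg_eq, hx j (by omega), isotropic_b (j + 1) i (by omega) hi, neg_zero]

theorem isSelfAdjoint_pow {c : BilinForm K V} {T : Module.End K V} (hT : c.IsSelfAdjoint T)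
    (n : ℕ) : c.IsSelfAdjoint (T ^ n : Module.End K V) := by
  induction n with
  | zero => exact LinearMap.isAdjointPair_one
  | succ n ih =>
    have : c.IsAdjointPair c (T * T ^ n) (T ^ n * T) := LinearMap.IsAdjointPair.mul hT ih
    rwa [← pow_succ', ← pow_succ] at this

theorem isCompl_span_dualCoannihilator {ι : Type*} [Finite ι] [DecidableEq ι] {u : ι → V}
    {g : ι → Dual K V} (hgu : ∀ i j, g i (u j) = if i = j then 1 else 0) :
    IsCompl (Submodule.span K (Set.range u))
      (Submodule.span K (Set.range g)).dualCoannihilator := by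
  cases nonempty_fintype ι
  have mem_coannihilator (v : V) :
      v ∈ (Submodule.span K (Set.range g)).dualCoannihilator ↔ ∀ i, g i v = 0 := by
    rw [← SetLike.mem_coe, Submodule.coe_dualCoannihilator_span]
    simp
  refine isCompl_iff.2 ⟨Submodule.disjoint_def.2 fun v hu hg ↦ ?_,
    Submodule.codisjoint_iff_exists_add_eq.2 fun v ↦ ?_⟩
  · obtain ⟨c, rfl⟩ := (Submodule.mem_span_range_iff_exists_fun K).1 hu
    have hc (i : ι) : c i = 0 := by simpa [hgu] using (mem_coannihilator _).1 hg i
    simp [hc]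
  · refine ⟨∑ i, g i v • u i, v - ∑ i, g i v • u i, ?_, ?_, by abel⟩
    · exact Submodule.sum_smul_mem _ _ fun i _ ↦ Submodule.subset_span ⟨i, rfl⟩
    · exact (mem_coannihilator _).2 fun i ↦ by simp [hgu]

/-- `U` and `W` split the pencil `a - λ b` orthogonally: they are complementary subspaces that are
orthogonal for both forms. Orthogonality is one-sided, which is enough for alternating forms. -/
structure IsOrthogonalSplitting (a b : BilinForm K V) (U W : Submodule K V) : Prop where
  isCompl : IsCompl U W
  left : ∀ u ∈ U, ∀ w ∈ W, a u w = 0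
  right : ∀ u ∈ U, ∀ w ∈ W, b u w = 0

/-- The pencil `a - λ b` has no nontrivial orthogonal splitting. -/
def IsIndecomposable (a b : BilinForm K V) : Prop :=
  ∀ ⦃U W : Submodule K V⦄, IsOrthogonalSplitting a b U W → U = ⊥ ∨ W = ⊥

namespace IsIndecomposable

variable {a b : BilinForm K V}

theorem symm (h : IsIndecomposable a b) : IsIndecomposable b a :=
  fun _ _ s ↦ h ⟨s.isCompl, s.right, s.left⟩

theorem sub_smul (h : IsIndecomposable a b) (r : K) : IsIndecomposable (a - r • b) b :=
  fun _ _ s ↦ h ⟨s.isCompl, fun u hu w hw ↦ by simpa [s.right u hu w hw] using s.left u hu w hw,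
    s.right⟩

-- The Fitting decomposition of a self-adjoint operator is orthogonal.
theorem isNilpotent_or_bijective [FiniteDimensional K V] (h : IsIndecomposable a b)
    {T : Module.End K V} (ha : a.IsSelfAdjoint T) (hb : b.IsSelfAdjoint T) :
    IsNilpotent T ∨ Function.Bijective T := by
  obtain ⟨n, compl, hn⟩ :=
    (T.eventually_isCompl_ker_pow_range_pow.and (Filter.eventually_ne_atTop 0)).exists
  have orthogonal {c : BilinForm K V} (hc : c.IsSelfAdjoint T) :
      ∀ u ∈ (T ^ n).ker, ∀ w ∈ (T ^ n).range, c u w = 0 := by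
    rintro u hu _ ⟨v, rfl⟩
    rw [← isSelfAdjoint_pow hc n u v, LinearMap.mem_ker.1 hu, map_zero, LinearMap.zero_apply]
  rcases h ⟨compl, orthogonal ha, orthogonal hb⟩ with hker | hrange
  · have inj : Function.Injective T := by
      have := LinearMap.ker_le_ker_comp T (T ^ (n - 1))
      rw [← Module.End.mul_eq_comp, pow_sub_one_mul hn, hker] at this
      exact LinearMap.ker_eq_bot.1 (le_bot_iff.1 this)
    exact .inr ⟨inj, LinearMap.injective_iff_surjective.1 inj⟩
  · exact .inl ⟨n, LinearMap.range_eq_bot.1 hrange⟩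

theorem exists_basis_of_dual_system (h : IsIndecomposable a b) {ι : Type*} [Finite ι]
    [DecidableEq ι] [Nonempty ι] {u : ι → V} {g : ι → Dual K V}
    (hgu : ∀ i j, g i (u j) = if i = j then 1 else 0)
    (ha : ∀ i, a (u i) ∈ Submodule.span K (Set.range g))
    (hb : ∀ i, b (u i) ∈ Submodule.span K (Set.range g)) :
    ∃ B : Basis ι K V, ⇑B = u := by
  have compl := isCompl_span_dualCoannihilator hgu
  have orthogonal {c : BilinForm K V} (hc : ∀ i, c (u i) ∈ Submodule.span K (Set.range g)) :
      ∀ v ∈ Submodule.span K (Set.range u),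
        ∀ w ∈ (Submodule.span K (Set.range g)).dualCoannihilator, c v w = 0 := by
    intro v hv w hw
    have hcv : c v ∈ Submodule.span K (Set.range g) :=
      (Submodule.span_le.2 (Set.range_subset_iff.2 hc) :
        _ ≤ (Submodule.span K (Set.range g)).comap c) hv
    exact (Submodule.mem_dualCoannihilator w).1 hw _ hcv
  have span_ne_bot : Submodule.span K (Set.range u) ≠ ⊥ := by
    inhabit ι
    intro hbot
    have : u default = 0 := by
      simpa [hbot] using Submodule.subset_span (R := K) (Set.mem_range_self (f := u) default)
    simpa [this] using hgu default default
  have indep : LinearIndependent K u :=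
    .of_pairwise_dual_eq_zero_one u g (fun i j hij ↦ by simp [hgu, hij]) (by simp [hgu])
  have complement_eq_bot := (h ⟨compl, orthogonal ha, orthogonal hb⟩).resolve_left span_ne_bot
  have spans : Submodule.span K (Set.range u) = ⊤ :=
    eq_top_of_isCompl_bot (complement_eq_bot ▸ compl)
  exact ⟨.mk indep spans.ge, Basis.coe_mk _ _⟩

end IsIndecomposable

/-! ### Dual chains -/

/-- The skew-symmetric matrix with `M` in its upper right corner and zero diagonal blocks. -/
def skewOfBlock {m n : Type*} (M : Matrix m n K) : Matrix (m ⊕ n) (m ⊕ n) K :=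
  fromBlocks 0 M (-Mᵀ) 0

/-- The `m × n` matrix with ones on the `d`-th superdiagonal, i.e. at the entries `(i, i + d)`. -/
def superdiagonal (K : Type*) [Field K] (d m n : ℕ) : Matrix (Fin m) (Fin n) K :=
  of fun i j ↦ if (j : ℕ) = i + d then 1 else 0

theorem toMatrix_eq_skewOfBlock {m n : Type*} [Fintype m] [Fintype n] [DecidableEq m]
    [DecidableEq n] {c : BilinForm K V} (hc : c.IsAlt) (B : Basis (m ⊕ n) K V) {M : Matrix m n K}
    (hleft : ∀ i j, c (B (.inl i)) (B (.inl j)) = 0)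
    (hright : ∀ i j, c (B (.inr i)) (B (.inr j)) = 0)
    (hM : ∀ i j, c (B (.inl i)) (B (.inr j)) = M i j) :
    toMatrix B c = skewOfBlock M := by
  ext (i | i) (j | j) <;> rw [LinearMap.BilinForm.toMatrix_apply]
  · exact hleft i j
  · exact hM i j
  · rw [← hc.neg_eq, hM]
    rfl
  · exact hright i j

/-- The vectors `y 0, …, y (m - 1)` and `x 0, …, x (n - 1)` form two chains of the pencil `a - λ b`
that are dual to each other through the functionals `ψ`. The lengths are related by `n = m` for
the Jordan chains of a regular pencil and by `n = m + 1` for the chains of a singular one. -/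
structure IsDualChainPair (a b : BilinForm K V) (m n : ℕ) (y x : ℕ → V) (ψ : ℕ → Dual K V) :
    Prop where
  le : m ≤ n
  le_succ : n ≤ m + 1
  right_y : ∀ i < m, b (y i) = ψ i
  left_y : ∀ i < m, a (y i) = ψ (i + 1)
  left_x_zero : a (x 0) = 0
  left_x_succ : ∀ j, j + 1 < n → a (x (j + 1)) = b (x j)
  right_x : ∀ j < n, m ≤ j → b (x j) = 0
  dual_eq_zero : ∀ i ≤ m, n ≤ i → ψ i = 0
  pairing : ∀ i ≤ m, ∀ j < n, ψ i (x j) = if i = j then 1 else 0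

namespace IsDualChainPair

variable {a b : BilinForm K V} {m n : ℕ} {y x : ℕ → V} {ψ : ℕ → Dual K V}

theorem isotropic_y (h : IsDualChainPair a b m n y x ψ) (ha : a.IsAlt) (hb : b.IsAlt) {i j : ℕ}
    (hi : i < m) (hj : j < m) : a (y i) (y j) = 0 ∧ b (y i) (y j) = 0 :=
  isotropic_of_chain ha hb
    (fun i hi ↦ (h.left_y i (Nat.lt_of_succ_lt hi)).trans (h.right_y (i + 1) hi).symm) hi hj

theorem isotropic_x (h : IsDualChainPair a b m n y x ψ) (ha : a.IsAlt) (hb : b.IsAlt) {i j : ℕ}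
    (hi : i < n) (hj : j < n) : b (x i) (x j) = 0 ∧ a (x i) (x j) = 0 :=
  isotropic_of_chain hb ha (fun j hj ↦ (h.left_x_succ j hj).symm) hi hj

theorem dual_apply_y (h : IsDualChainPair a b m n y x ψ) (ha : a.IsAlt) (hb : b.IsAlt) {i j : ℕ}
    (hi : i ≤ m) (hj : j < m) : ψ i (y j) = 0 := by
  rcases i with _ | i
  · rw [← h.right_y 0 (by omega), (h.isotropic_y ha hb (by omega) hj).2]
  · rw [← h.left_y i hi, (h.isotropic_y ha hb hi hj).1]

theorem exists_basis (h : IsDualChainPair a b m n y x ψ) (hn : 0 < n) (hab : IsIndecomposable a b)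
    (ha : a.IsAlt) (hb : b.IsAlt) :
    ∃ B : Basis (Fin m ⊕ Fin n) K V,
      ⇑B = Sum.elim (fun i : Fin m ↦ y i) (fun j : Fin n ↦ x j) := by
  let g : Fin m ⊕ Fin n → Dual K V := Sum.elim (fun i ↦ -b (x i)) fun j ↦ ψ j
  have right_x_mem (j : ℕ) (hj : j < n) : b (x j) ∈ Submodule.span K (Set.range g) := by
    rcases lt_or_ge j m with hjm | hjm
    · exact neg_mem_iff.1 (Submodule.subset_span ⟨.inl ⟨j, hjm⟩, rfl⟩)
    · exact h.right_x j hj hjm ▸ zero_mem _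
  have dual_mem (i : ℕ) (hi : i ≤ m) : ψ i ∈ Submodule.span K (Set.range g) := by
    rcases lt_or_ge i n with hin | hin
    · exact Submodule.subset_span ⟨.inr ⟨i, hin⟩, rfl⟩
    · exact h.dual_eq_zero i hi hin ▸ zero_mem _
  have : Nonempty (Fin m ⊕ Fin n) := ⟨.inr ⟨0, hn⟩⟩
  have m_le_n := h.le
  have n_le_succ := h.le_succ
  refine hab.exists_basis_of_dual_system (g := g) ?_ ?_ ?_
  · rintro (i | i) (j | j)
    · simp [g, hb.neg_eq, h.right_y j j.2, h.pairing j j.2.le i (by omega), Fin.ext_iff, eq_comm]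
    · simp [g, (h.isotropic_x ha hb (i := i) (by omega) j.2).1]
    · simp [g, h.dual_apply_y ha hb (i := i) (by omega) j.2]
    · simp [g, h.pairing i (by omega) j j.2, Fin.ext_iff]
  · rintro (i | ⟨_ | j, hj⟩)
    · exact h.left_y i i.2 ▸ dual_mem (i + 1) i.2
    · exact h.left_x_zero ▸ zero_mem _
    · exact h.left_x_succ j hj ▸ right_x_mem j (by omega)
  · rintro (i | j)
    · exact h.right_y i i.2 ▸ dual_mem i i.2.le
    · exact right_x_mem j j.2

theorem exists_basis_toMatrix_eq (h : IsDualChainPair a b m n y x ψ) (hn : 0 < n)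
    (hab : IsIndecomposable a b) (ha : a.IsAlt) (hb : b.IsAlt) :
    ∃ B : Basis (Fin m ⊕ Fin n) K V,
      toMatrix B a = skewOfBlock (superdiagonal K 1 m n) ∧
      toMatrix B b = skewOfBlock (superdiagonal K 0 m n) := by
  obtain ⟨B, hB⟩ := h.exists_basis hn hab ha hb
  refine ⟨B, toMatrix_eq_skewOfBlock ha B (fun i j ↦ ?_) (fun i j ↦ ?_) (fun i j ↦ ?_),
    toMatrix_eq_skewOfBlock hb B (fun i j ↦ ?_) (fun i j ↦ ?_) (fun i j ↦ ?_)⟩ <;>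
    simp only [hB, Sum.elim_inl, Sum.elim_inr]
  · exact (h.isotropic_y ha hb i.2 j.2).1
  · exact (h.isotropic_x ha hb i.2 j.2).2
  · rw [h.left_y i i.2, h.pairing (i + 1) i.2 j j.2]
    exact if_congr eq_comm rfl rfl
  · exact (h.isotropic_y ha hb i.2 j.2).2
  · exact (h.isotropic_x ha hb i.2 j.2).1
  · rw [h.right_y i i.2, h.pairing i i.2.le j j.2]
    exact if_congr eq_comm rfl rfl

end IsDualChainPair

/-! ### Regular pencils -/

theorem linearIndependent_pow_apply {T : Module.End K V} {n : ℕ} {v : V}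
    (hv : (T ^ n) v ≠ 0) (hv' : (T ^ (n + 1)) v = 0) :
    LinearIndependent K fun i : Fin (n + 1) ↦ (T ^ (i : ℕ)) v := by
  induction n generalizing v with
  | zero => simpa [linearIndependent_subsingleton_index_iff] using hv
  | succ n ih =>
    have cons : (fun i : Fin (n + 2) ↦ (T ^ (i : ℕ)) v) =
        Fin.cons v fun i : Fin (n + 1) ↦ (T ^ (i : ℕ)) (T v) := by
      ext i
      cases i using Fin.cases <;> simp [pow_succ]
    rw [cons, linearIndependent_finCons]
    refine ⟨ih (by simpa [pow_succ] using hv) (by simpa [pow_succ] using hv'), fun mem ↦ hv ?_⟩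
    refine (Submodule.span_le.2 ?_ : _ ≤ LinearMap.ker (T ^ (n + 1))) mem
    rintro _ ⟨i, rfl⟩
    rw [SetLike.mem_coe, LinearMap.mem_ker, ← Module.End.mul_apply, ← Module.End.mul_apply,
      ← pow_add, ← pow_succ, show n + 1 + i + 1 = i + (n + 1 + 1) by omega, pow_add,
      Module.End.mul_apply, hv', map_zero]

theorem exists_dual_apply_eq_ite_of_linearIndependent {ι : Type*} [Finite ι] [DecidableEq ι]
    {v : ι → V} (hv : LinearIndependent K v) (i : ι) :
    ∃ f : Dual K V, ∀ j, f (v j) = if j = i then 1 else 0 := by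
  cases nonempty_fintype ι
  obtain ⟨f, hf⟩ := LinearMap.dualMap_surjective_of_injective
    (linearIndependent_iff_injective_fintypeLinearCombination.1 hv) (LinearMap.proj i)
  refine ⟨f, fun j ↦ ?_⟩
  simpa [Pi.single_apply, eq_comm] using DFunLike.congr_fun hf (Pi.single j 1)

section JordanPair

variable {p q : BilinForm K V} {T : Module.End K V}

theorem isSelfAdjoint_of_apply_eq (hp : p.IsAlt) (hq : q.IsAlt) (hT : ∀ v, q (T v) = p v) :
    q.IsSelfAdjoint T := fun x y ↦ by
  rw [hT, ← hp.neg_eq, ← hT, hq.neg_eq]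

theorem exists_pow_apply_dual (hp : p.IsAlt) (hq : q.IsAlt)
    (hqn : q.Nondegenerate) (hT : ∀ v, q (T v) = p v) [FiniteDimensional K V] [Nontrivial V]
    (nil : IsNilpotent T) :
    ∃ (n : ℕ) (u z : V), T ^ (n + 1) = 0 ∧
      ∀ i, q ((T ^ i) z) u = if i = n then 1 else 0 := by
  obtain ⟨n, hn⟩ := Nat.exists_eq_add_one.2 (pos_nilpotencyClass_iff.2 nil)
  have pow_eq_zero : T ^ (n + 1) = 0 := hn ▸ pow_nilpotencyClass nil
  have pow_ne_zero : T ^ n ≠ 0 := by simpa [hn] using pow_pred_nilpotencyClass nil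
  obtain ⟨u, hu⟩ := DFunLike.ne_iff.1 pow_ne_zero
  have indep := linearIndependent_pow_apply hu (by rw [pow_eq_zero, LinearMap.zero_apply])
  obtain ⟨f, hf⟩ := exists_dual_apply_eq_ite_of_linearIndependent indep (Fin.last n)
  refine ⟨n, u, (q.toDual hqn).symm f, pow_eq_zero, fun i ↦ ?_⟩
  rw [isSelfAdjoint_pow (isSelfAdjoint_of_apply_eq hp hq hT),
    LinearMap.BilinForm.apply_toDual_symm_apply]
  rcases lt_or_ge i (n + 1) with hi | hi
  · simpa [Fin.ext_iff] using hf ⟨i, hi⟩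
  · rw [pow_eq_zero_of_le hi pow_eq_zero, LinearMap.zero_apply, map_zero, if_neg (by omega)]

theorem exists_isDualChainPair_of_isNilpotent [FiniteDimensional K V] [Nontrivial V]
    (hp : p.IsAlt) (hq : q.IsAlt) (hqn : q.Nondegenerate) (hT : ∀ v, q (T v) = p v)
    (nil : IsNilpotent T) :
    ∃ (h : ℕ) (y x : ℕ → V) (ψ : ℕ → Dual K V), 1 ≤ h ∧ IsDualChainPair p q h h y x ψ := by
  obtain ⟨n, u, z, pow_eq_zero, pairing⟩ := exists_pow_apply_dual hp hq hqn hT nil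
  refine ⟨n + 1, fun i ↦ (T ^ i) z, fun j ↦ (T ^ (n - j)) u, fun i ↦ q ((T ^ i) z), by omega,
    { le := le_rfl
      le_succ := Nat.le_succ _
      right_y := fun _ _ ↦ rfl
      left_y := fun i _ ↦ by rw [← hT, ← Module.End.mul_apply, ← pow_succ']
      left_x_zero := by
        rw [← hT, ← Module.End.mul_apply, ← pow_succ', Nat.sub_zero, pow_eq_zero,
          LinearMap.zero_apply, map_zero]
      left_x_succ := fun j hj ↦ by
        rw [← hT, ← Module.End.mul_apply, ← pow_succ', show n - (j + 1) + 1 = n - j by omega]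
      right_x := fun j hj hj' ↦ by omega
      dual_eq_zero := fun i _ hi ↦ by
        rw [pow_eq_zero_of_le hi pow_eq_zero, LinearMap.zero_apply, map_zero]
      pairing := fun i _ j hj ↦ ?_ }⟩
  rw [← isSelfAdjoint_pow (isSelfAdjoint_of_apply_eq hp hq hT), ← Module.End.mul_apply,
    ← pow_add, pairing]
  congr 1
  grind

theorem IsIndecomposable.isNilpotent_or_bijective_of_apply_eq [FiniteDimensional K V]
    (hpq : IsIndecomposable p q) (hp : p.IsAlt) (hq : q.IsAlt) (hT : ∀ v, q (T v) = p v) :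
    IsNilpotent T ∨ Function.Bijective T := by
  have self_adjoint := isSelfAdjoint_of_apply_eq hp hq hT
  exact hpq.isNilpotent_or_bijective (fun v w ↦ by rw [← hT, self_adjoint, hT]) self_adjoint

end JordanPair

section Regular

variable [FiniteDimensional K V] {a b p q : BilinForm K V}

theorem IsIndecomposable.exists_isDualChainPair_of_not_nondegenerate (hpq : IsIndecomposable p q)
    (hp : p.IsAlt) (hq : q.IsAlt) (hqn : q.Nondegenerate) (hpn : ¬ p.Nondegenerate) :
    ∃ (h : ℕ) (y x : ℕ → V) (ψ : ℕ → Dual K V), 1 ≤ h ∧ IsDualChainPair p q h h y x ψ := by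
  rw [LinearMap.BilinForm.nondegenerate_iff_ker_eq_bot, ← ne_eq, Submodule.ne_bot_iff] at hpn
  obtain ⟨v, hv, hv0⟩ := hpn
  have := nontrivial_of_ne v 0 hv0
  let T := p.symmCompOfNondegenerate q hqn
  have hT : ∀ v, q (T v) = p v := p.comp_symmCompOfNondegenerate_apply hqn
  have T_v : T v = 0 := LinearMap.ker_eq_bot'.1 hqn.ker_eq_bot _ ((hT v).trans hv)
  have nil := (hpq.isNilpotent_or_bijective_of_apply_eq hp hq hT).resolve_right
    fun bij ↦ hv0 (bij.injective (T_v.trans (map_zero T).symm))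
  exact exists_isDualChainPair_of_isNilpotent hp hq hqn hT nil

theorem exists_sub_smul_not_nondegenerate [IsAlgClosed K] [Nontrivial V] (a : BilinForm K V)
    (hb : b.Nondegenerate) : ∃ μ : K, ¬ (a - μ • b).Nondegenerate := by
  obtain ⟨μ, hμ⟩ := Module.End.exists_eigenvalue (a.symmCompOfNondegenerate b hb)
  obtain ⟨v, hv⟩ := hμ.exists_hasEigenvector
  refine ⟨μ, fun h ↦ hv.2 ?_⟩
  have a_v : a v = μ • b v := by
    rw [← a.comp_symmCompOfNondegenerate_apply hb, hv.apply_eq_smul, map_smul]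
  simpa [h.ker_eq_bot] using (show v ∈ (a - μ • b).ker by simp [a_v])

-- If `T = (a - r b)⁻¹ b` is nilpotent, then `a = (a - r b) (1 + r T)` is nondegenerate.
theorem IsIndecomposable.nondegenerate_or_nondegenerate (hab : IsIndecomposable a b) (ha : a.IsAlt)
    (hb : b.IsAlt) {r : K} (hr : (a - r • b).Nondegenerate) :
    a.Nondegenerate ∨ b.Nondegenerate := by
  let T := b.symmCompOfNondegenerate (a - r • b) hr
  have hT : ∀ v, (a - r • b) (T v) = b v := b.comp_symmCompOfNondegenerate_apply hr
  have c_inj : ∀ v, (a - r • b) v = 0 → v = 0 := LinearMap.ker_eq_bot'.1 hr.ker_eq_bot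
  simp only [LinearMap.BilinForm.nondegenerate_iff_ker_eq_bot, LinearMap.ker_eq_bot']
  rcases (hab.sub_smul r).symm.isNilpotent_or_bijective_of_apply_eq hb (ha.sub (hb.smul r)) hT
    with nil | bij
  · left
    intro v hv
    have bij := (Module.End.isUnit_iff _).1 (nil.smul r).isUnit_one_add
    have factor : (a - r • b) ((1 + r • T) v) = a v := by
      simp only [LinearMap.add_apply, Module.End.one_apply, LinearMap.smul_apply, map_add,
        map_smul, hT]
      simp
    exact bij.injective ((c_inj _ (factor.trans hv)).trans (map_zero _).symm)
  · right
    intro v hv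
    exact bij.injective ((c_inj (T v) ((hT v).trans hv)).trans (map_zero T).symm)

end Regular

/-! ### Singular pencils -/

/-- The vector polynomial `∑ i < n, λ ^ i • x i` lies in the kernel of the pencil `a - λ b`. The
coefficients are recorded as a sequence that vanishes from index `n` on. -/
structure IsPencilKernel (a b : BilinForm K V) (n : ℕ) (x : ℕ → V) : Prop where
  left_zero : a (x 0) = 0
  left_succ : ∀ i, a (x (i + 1)) = b (x i)
  eq_zero : ∀ i, n ≤ i → x i = 0

section Singular

open Polynomial

variable {a b : BilinForm K V}

theorem exists_polynomial_vecMul_pencil_eq_zero [Infinite K] {ι : Type*} [Fintype ι]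
    [DecidableEq ι] {A B : Matrix ι ι K} (h : ∀ r : K, (A - r • B).det = 0) :
    ∃ v : ι → K[X], v ≠ 0 ∧ v ᵥ* (A.map C - (X : K[X]) • B.map C) = 0 := by
  refine exists_vecMul_eq_zero_iff.2 (Polynomial.funext fun r ↦ ?_)
  rw [← coe_evalRingHom, RingHom.map_det, map_zero, ← h r]
  congr 1
  ext i j
  simpa using mul_comm _ _

theorem vecMul_coeff_of_vecMul_pencil_eq_zero {ι : Type*} [Fintype ι] {A B : Matrix ι ι K}
    {v : ι → K[X]} (h : v ᵥ* (A.map C - (X : K[X]) • B.map C) = 0) :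
    (fun i ↦ (v i).coeff 0) ᵥ* A = 0 ∧
      ∀ k, (fun i ↦ (v i).coeff (k + 1)) ᵥ* A = (fun i ↦ (v i).coeff k) ᵥ* B := by
  have entry (j : ι) : ∑ i, v i * C (A i j) = ∑ i, v i * C (B i j) * X := by
    simpa [vecMul, dotProduct, mul_sub, mul_assoc, sub_eq_zero] using congrFun h j
  refine ⟨funext fun j ↦ ?_, fun k ↦ funext fun j ↦ ?_⟩
  · simpa [mul_coeff_zero, vecMul, dotProduct] using congrArg (coeff · 0) (entry j)
  · simpa [vecMul, dotProduct, ← Finset.sum_mul] using congrArg (coeff · (k + 1)) (entry j)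

theorem exists_isPencilKernel_ne_zero [FiniteDimensional K V] [Infinite K]
    (hab : ∀ r : K, ¬ (a - r • b).Nondegenerate) : ∃ n x, IsPencilKernel a b n x ∧ x ≠ 0 := by
  let β := Module.finBasis K V
  have det_eq_zero (r : K) : (toMatrix β a - r • toMatrix β b).det = 0 := by
    rw [← map_smul, ← map_sub]
    exact not_ne_iff.1 (mt (LinearMap.BilinForm.nondegenerate_iff_det_ne_zero β).2 (hab r))
  obtain ⟨v, hv, kernel⟩ := exists_polynomial_vecMul_pencil_eq_zero det_eq_zero
  obtain ⟨coeff_zero, coeff_succ⟩ := vecMul_coeff_of_vecMul_pencil_eq_zero kernel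
  let x (k : ℕ) : V := ∑ i, (v i).coeff k • β i
  have form_x (c : BilinForm K V) (k : ℕ) (j) :
      c (x k) (β j) = ((fun i ↦ (v i).coeff k) ᵥ* toMatrix β c) j := by
    simp [x, vecMul, dotProduct, LinearMap.BilinForm.toMatrix_apply]
  refine ⟨Finset.univ.sup (fun i ↦ (v i).natDegree + 1), x, ⟨?_, fun k ↦ ?_, fun k hk ↦ ?_⟩, ?_⟩
  · exact β.ext fun j ↦ (form_x a 0 j).trans (congrFun coeff_zero j)
  · exact β.ext fun j ↦ by rw [form_x, form_x, coeff_succ]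
  · refine Finset.sum_eq_zero fun i hi ↦ ?_
    rw [coeff_eq_zero_of_natDegree_lt ((Finset.le_sup hi).trans hk), zero_smul]
  · refine fun hx ↦ hv (funext fun i ↦ Polynomial.ext fun k ↦ ?_)
    simpa using Fintype.linearIndependent_iff.1 β.linearIndependent _ (congrFun hx k) i

theorem exists_minimal_isPencilKernel (h : ∃ n x, IsPencilKernel a b n x ∧ x ≠ 0) :
    ∃ k x, IsPencilKernel a b (k + 1) x ∧ x 0 ≠ 0 ∧ ∀ z, IsPencilKernel a b k z → z = 0 := by
  classical
  obtain ⟨x, hx, hx0⟩ := Nat.find_spec h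
  have pos : Nat.find h ≠ 0 := fun h0 ↦ hx0 (funext fun i ↦ hx.eq_zero i (h0 ▸ Nat.zero_le i))
  obtain ⟨k, hk⟩ := Nat.exists_eq_succ_of_ne_zero pos
  have minimal (z : ℕ → V) (hz : IsPencilKernel a b k z) : z = 0 := by
    by_contra hz0
    exact Nat.find_min h (hk ▸ Nat.lt_succ_self k) ⟨z, hz, hz0⟩
  rw [hk] at hx
  refine ⟨k, x, hx, fun head ↦ hx0 ?_, minimal⟩
  have tail : (fun i ↦ x (i + 1)) = 0 := minimal _
    { left_zero := by rw [hx.left_succ, head, map_zero]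
      left_succ := fun i ↦ hx.left_succ (i + 1)
      eq_zero := fun i hi ↦ hx.eq_zero (i + 1) (Nat.succ_le_succ hi) }
  ext (_ | i)
  · exact head
  · exact congrFun tail i

theorem exists_forall_dual_apply_eq_sum [FiniteDimensional K V] {n : ℕ}
    (Φ : Dual K (Fin n → Dual K V)) :
    ∃ z : ℕ → V, (∀ i, n ≤ i → z i = 0) ∧ ∀ f, Φ f = ∑ i : Fin n, f i (z i) := by
  let z (i : Fin n) : V :=
    (Module.evalEquiv K V).symm (Φ ∘ₗ LinearMap.single K (fun _ ↦ Dual K V) i)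
  refine ⟨fun i ↦ if h : i < n then z ⟨i, h⟩ else 0, fun i hi ↦ dif_neg hi.not_gt, fun f ↦ ?_⟩
  conv_lhs => rw [← Finset.univ_sum_single f, map_sum]
  simp [z]

theorem isPencilKernel_of_forall_sum_eq_zero (ha : a.IsAlt) (hb : b.IsAlt) {n : ℕ} {z : ℕ → V}
    (hz : ∀ i, n ≤ i → z i = 0)
    (hsum : ∀ y : ℕ → V, ∑ i ∈ Finset.range n, (a (y i) (z i) - b (y (i + 1)) (z i)) = 0) :
    IsPencilKernel a b n z := by
  have left_apply (j : ℕ) (v : V) :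
      a v (z j) = ∑ i ∈ Finset.range n, b (Pi.single (M := fun _ ↦ V) j v (i + 1)) (z i) := by
    rw [← sub_eq_zero, ← hsum (Pi.single j v), Finset.sum_sub_distrib, sub_left_inj,
      Finset.sum_eq_single j]
    · rw [Pi.single_eq_same]
    · exact fun i _ hij ↦ by simp [hij]
    · exact fun hj ↦ by rw [hz j (by simpa using hj), map_zero]
  refine ⟨LinearMap.ext fun v ↦ ?_, fun j ↦ LinearMap.ext fun v ↦ ?_, hz⟩
  · rw [← ha.neg_eq, left_apply]
    simp
  · rw [← ha.neg_eq, ← hb.neg_eq, left_apply, Finset.sum_eq_single j]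
    · rw [Pi.single_eq_same]
    · exact fun i _ hij ↦ by simp [hij]
    · exact fun hj ↦ by rw [hz j (by simpa using hj), map_zero]

-- By skew-symmetry the kernel of the transposed system consists of the pencil kernels.
theorem exists_forall_sub_eq_of_forall_isPencilKernel_eq_zero [FiniteDimensional K V]
    (ha : a.IsAlt) (hb : b.IsAlt) {n : ℕ} (hab : ∀ z, IsPencilKernel a b n z → z = 0)
    (f : ℕ → Dual K V) : ∃ y : ℕ → V, ∀ i < n, a (y i) - b (y (i + 1)) = f i := by
  let L : (ℕ → V) →ₗ[K] Fin n → Dual K V :=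
    .pi fun i ↦ a ∘ₗ .proj (i : ℕ) - b ∘ₗ .proj (i + 1 : ℕ)
  suffices Function.Surjective L by
    obtain ⟨y, hy⟩ := this fun i ↦ f i
    exact ⟨y, fun i hi ↦ congrFun hy ⟨i, hi⟩⟩
  rw [← LinearMap.dualMap_injective_iff, injective_iff_map_eq_zero]
  intro Φ hΦ
  obtain ⟨z, z_eq_zero, Φ_eq⟩ := exists_forall_dual_apply_eq_sum Φ
  have kernel : IsPencilKernel a b n z :=
    isPencilKernel_of_forall_sum_eq_zero ha hb z_eq_zero fun y ↦ by
      rw [Finset.sum_range]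
      exact (Φ_eq (L y)).symm.trans (DFunLike.congr_fun hΦ y)
  ext g
  simp [Φ_eq, hab z kernel]

theorem eq_ite_of_toeplitz {R : Type*} [Zero R] [One R] {k : ℕ} {f : ℕ → ℕ → R}
    (hf : ∀ i < k, ∀ j < k, f (i + 1) (j + 1) = f i j) (hcol : ∀ i < k, f (i + 1) 0 = 0)
    (hrow : ∀ i < k, f i k = 0) (h0 : f 0 0 = 1) {i j : ℕ} (hi : i ≤ k) (hj : j ≤ k) :
    f i j = if i = j then 1 else 0 := by
  have shift (d : ℕ) : ∀ i j, i + d ≤ k → j + d ≤ k → f (i + d) (j + d) = f i j := by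
    induction d with
    | zero => exact fun _ _ _ _ ↦ rfl
    | succ d ih => exact fun i j hi hj ↦ (hf _ hi _ hj).trans (ih i j (by omega) (by omega))
  rcases lt_trichotomy i j with h | rfl | h
  · have := shift (k - j) i j (by omega) (by omega)
    rw [if_neg h.ne, ← this, Nat.add_sub_cancel' hj, hrow _ (by omega)]
  · simpa [h0] using shift i 0 0 (by omega) (by omega)
  · obtain ⟨d, rfl⟩ := Nat.exists_eq_add_of_lt h
    have := shift j (d + 1) 0 (by omega) (by omega)
    rw [if_neg h.ne', show j + d + 1 = d + 1 + j by omega, ← hcol d (by omega), ← this, zero_add]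

theorem IsPencilKernel.isDualChainPair (ha : a.IsAlt) (hb : b.IsAlt) {k : ℕ} {x y : ℕ → V}
    {ψ : ℕ → Dual K V} (hx : IsPencilKernel a b (k + 1) x) (right_y : ∀ i < k, b (y i) = ψ i)
    (left_y : ∀ i < k, a (y i) = ψ (i + 1)) (h0 : ψ 0 (x 0) = 1) :
    IsDualChainPair a b k (k + 1) y x ψ where
  le := Nat.le_succ k
  le_succ := le_rfl
  right_y := right_y
  left_y := left_y
  left_x_zero := hx.left_zero
  left_x_succ j _ := hx.left_succ j
  right_x j _ hj := by rw [← hx.left_succ, hx.eq_zero _ (by omega), map_zero]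
  dual_eq_zero i hi hi' := by omega
  pairing i hi j hj := by
    refine eq_ite_of_toeplitz (f := fun i j ↦ ψ i (x j)) (fun i hi j _ ↦ ?_) (fun i hi ↦ ?_)
      (fun i hi ↦ ?_) h0 hi (Nat.lt_succ_iff.1 hj)
    · rw [← left_y i hi, ← right_y i hi, ← ha.neg_eq, ← hb.neg_eq, hx.left_succ]
    · rw [← left_y i hi, ← ha.neg_eq, hx.left_zero, LinearMap.zero_apply, neg_zero]
    · rw [← right_y i hi, ← hb.neg_eq, ← hx.left_succ, hx.eq_zero (k + 1) le_rfl, map_zero,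
        LinearMap.zero_apply, neg_zero]

theorem exists_isDualChainPair_of_forall_not_nondegenerate [FiniteDimensional K V] [Infinite K]
    (ha : a.IsAlt) (hb : b.IsAlt) (hab : ∀ r : K, ¬ (a - r • b).Nondegenerate) :
    ∃ (k : ℕ) (y x : ℕ → V) (ψ : ℕ → Dual K V), IsDualChainPair a b k (k + 1) y x ψ := by
  obtain ⟨k, x, hx, x_zero, minimal⟩ :=
    exists_minimal_isPencilKernel (exists_isPencilKernel_ne_zero hab)
  obtain ⟨f, hf⟩ := Module.Projective.exists_dual_eq_one K x_zero
  -- Adding `f` to `a (y 0)` normalizes its value at `x 0`, where `a (y 0)` vanishes.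
  let φ (i : ℕ) : Dual K V := if i = 0 then f else 0
  obtain ⟨y, hy⟩ := exists_forall_sub_eq_of_forall_isPencilKernel_eq_zero ha hb minimal (-φ)
  refine ⟨k, fun i ↦ y (i + 1), x, fun i ↦ a (y i) + φ i, hx.isDualChainPair ha hb ?_ ?_ ?_⟩
  · intro i hi
    rw [← sub_eq_iff_eq_add', ← neg_sub, hy i hi, Pi.neg_apply, neg_neg]
  · simp [φ]
  · simp [φ, hf, ← ha.neg_eq (x 0), hx.left_zero]

end Singular

/-! ### Canonical forms -/

theorem toMatrix_reindex {m n : Type*} [Fintype m] [Fintype n] [DecidableEq m] [DecidableEq n]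
    (B : Basis m K V) (e : m ≃ n) (c : BilinForm K V) :
    toMatrix (B.reindex e) c = (toMatrix B c).submatrix e.symm e.symm := by
  ext i j
  simp [LinearMap.BilinForm.toMatrix_apply]

theorem toMatrix_prod_map_prodEquivOfIsCompl {m n : Type*} [Fintype m] [Fintype n] [DecidableEq m]
    [DecidableEq n] {c : BilinForm K V} (hc : c.IsRefl) {U W : Submodule K V} (hUW : IsCompl U W)
    (orthogonal : ∀ u ∈ U, ∀ w ∈ W, c u w = 0) (B₁ : Basis m K U) (B₂ : Basis n K W) :
    toMatrix ((B₁.prod B₂).map (U.prodEquivOfIsCompl W hUW)) c =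
      fromBlocks (toMatrix B₁ (c.restrict U)) 0 0 (toMatrix B₂ (c.restrict W)) := by
  ext (i | i) (j | j)
  · simp [LinearMap.BilinForm.toMatrix_apply]
  · simpa [LinearMap.BilinForm.toMatrix_apply] using orthogonal _ (B₁ i).2 _ (B₂ j).2
  · simpa [LinearMap.BilinForm.toMatrix_apply] using hc _ _ (orthogonal _ (B₁ j).2 _ (B₂ i).2)
  · simp [LinearMap.BilinForm.toMatrix_apply]

theorem blockDiagonal'_sum {ι₁ ι₂ R : Type*} [DecidableEq ι₁] [DecidableEq ι₂] [Zero R]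
    {t : ι₁ ⊕ ι₂ → Type*} (M : ∀ i, Matrix (t i) (t i) R) :
    blockDiagonal' M =
      (fromBlocks (blockDiagonal' fun i ↦ M (.inl i)) 0 0
        (blockDiagonal' fun i ↦ M (.inr i))).submatrix
        (Equiv.sumSigmaDistrib t) (Equiv.sumSigmaDistrib t) := by
  ext ⟨i | i, k⟩ ⟨j | j, l⟩
  · by_cases h : i = j
    · subst h
      simp [blockDiagonal'_apply_eq]
    · simp [blockDiagonal'_apply_ne, h]
  · simp [blockDiagonal'_apply_ne]
  · simp [blockDiagonal'_apply_ne]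
  · by_cases h : i = j
    · subst h
      simp [blockDiagonal'_apply_eq]
    · simp [blockDiagonal'_apply_ne, h]

theorem blockDiagonal'_comp {ι κ R : Type*} [DecidableEq ι] [DecidableEq κ] [Zero R]
    {t : κ → Type*} (e : ι ≃ κ) (M : ∀ i, Matrix (t i) (t i) R) :
    (blockDiagonal' fun i ↦ M (e i)) =
      (blockDiagonal' M).submatrix (Equiv.sigmaCongrLeft e) (Equiv.sigmaCongrLeft e) := by
  ext ⟨i, k⟩ ⟨j, l⟩
  by_cases h : i = j
  · subst h
    simp [blockDiagonal'_apply_eq]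
  · simp [blockDiagonal'_apply_ne, h]

theorem blockDiagonal'_unique {ι R : Type*} [DecidableEq ι] [Unique ι] [Zero R]
    {t : ι → Type*} (M : ∀ i, Matrix (t i) (t i) R) :
    blockDiagonal' M = (M default).submatrix (Equiv.uniqueSigma t) (Equiv.uniqueSigma t) := by
  ext ⟨i, k⟩ ⟨j, l⟩
  obtain rfl := Unique.eq_default i
  obtain rfl := Unique.eq_default j
  simp [blockDiagonal'_apply_eq, Equiv.uniqueSigma]

theorem superdiagonal_zero_self (h : ℕ) : superdiagonal K 0 h h = 1 := by
  ext i j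
  simp [superdiagonal, Matrix.one_apply, Fin.ext_iff, eq_comm]

theorem skewOfBlock_one {n : Type*} [DecidableEq n] :
    skewOfBlock (1 : Matrix n n K) = fromBlocks 0 1 (-1) 0 := by
  rw [skewOfBlock, transpose_one]

theorem skewOfBlock_add_smul {m n : Type*} (M N : Matrix m n K) (r : K) :
    skewOfBlock (M + r • N) = skewOfBlock M + r • skewOfBlock N := by
  simp [skewOfBlock, fromBlocks_smul, fromBlocks_add, add_comm]

theorem jordanBlock_eq_superdiagonal_add_smul_one (h : ℕ) (μ : ℂ) :
    jordanBlock h μ = superdiagonal ℂ 1 h h + μ • 1 := by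
  ext i j
  by_cases hij : j = i <;> simp [jordanBlock, superdiagonal, hij, eq_comm (a := i)]

theorem IsIndecomposable.exists_basis_toMatrix_eq_of_not_nondegenerate [FiniteDimensional K V]
    {p q : BilinForm K V} (hpq : IsIndecomposable p q) (hp : p.IsAlt) (hq : q.IsAlt)
    (hqn : q.Nondegenerate) (hpn : ¬ p.Nondegenerate) :
    ∃ (h : ℕ) (B : Basis (Fin h ⊕ Fin h) K V), 1 ≤ h ∧
      toMatrix B p = skewOfBlock (superdiagonal K 1 h h) ∧ toMatrix B q = skewOfBlock 1 := by
  obtain ⟨h, y, x, ψ, one_le, chains⟩ :=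
    hpq.exists_isDualChainPair_of_not_nondegenerate hp hq hqn hpn
  obtain ⟨B, hBp, hBq⟩ := chains.exists_basis_toMatrix_eq one_le hpq hp hq
  exact ⟨h, B, one_le, hBp, superdiagonal_zero_self (K := K) h ▸ hBq⟩

section Complex

variable {V : Type*} [AddCommGroup V] [Module ℂ V] {a b : BilinForm ℂ V}

namespace IsIndecomposable

theorem exists_basis_toMatrix_eq_jordanBlock [FiniteDimensional ℂ V] [Nontrivial V]
    (hab : IsIndecomposable a b) (ha : a.IsAlt) (hb : b.IsAlt) (hbn : b.Nondegenerate) :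
    ∃ (h : ℕ) (μ : ℂ) (B : Basis (Fin h ⊕ Fin h) ℂ V), 1 ≤ h ∧
      toMatrix B a = skewOfBlock (jordanBlock h μ) ∧ toMatrix B b = skewOfBlock 1 := by
  obtain ⟨μ, hμ⟩ := exists_sub_smul_not_nondegenerate a hbn
  obtain ⟨h, B, one_le, hBa, hBb⟩ := (hab.sub_smul μ).exists_basis_toMatrix_eq_of_not_nondegenerate
    (ha.sub (hb.smul μ)) hb hbn hμ
  refine ⟨h, μ, B, one_le, ?_, hBb⟩
  rw [jordanBlock_eq_superdiagonal_add_smul_one, skewOfBlock_add_smul, ← hBa, ← hBb, ← map_smul,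
    ← map_add, sub_add_cancel]

theorem exists_skewBlock [FiniteDimensional ℂ V] [Nontrivial V] (hab : IsIndecomposable a b)
    (ha : a.IsAlt) (hb : b.IsAlt) :
    ∃ s : SkewBlock, s.valid ∧ ∃ B : Basis (Fin s.size) ℂ V,
      toMatrix B a = s.matA ∧ toMatrix B b = s.matB := by
  have toMatrix_finSum {m n : ℕ} {B : Basis (Fin m ⊕ Fin n) ℂ V} {c : BilinForm ℂ V}
      {N : Matrix (Fin m ⊕ Fin n) (Fin m ⊕ Fin n) ℂ} (h : toMatrix B c = N) :
      toMatrix (B.reindex finSumFinEquiv) c =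
        N.submatrix finSumFinEquiv.symm finSumFinEquiv.symm := by
    rw [toMatrix_reindex, h]
  by_cases singular : ∀ r : ℂ, ¬ (a - r • b).Nondegenerate
  · obtain ⟨k, y, x, ψ, chains⟩ :=
      exists_isDualChainPair_of_forall_not_nondegenerate ha hb singular
    obtain ⟨B, hBa, hBb⟩ := chains.exists_basis_toMatrix_eq k.succ_pos hab ha hb
    exact ⟨.M k, trivial, B.reindex finSumFinEquiv, toMatrix_finSum hBa, toMatrix_finSum hBb⟩
  by_cases hbn : b.Nondegenerate
  · obtain ⟨h, μ, B, one_le, hBa, hBb⟩ := hab.exists_basis_toMatrix_eq_jordanBlock ha hb hbn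
    exact ⟨.H h μ, one_le, B.reindex finSumFinEquiv, toMatrix_finSum hBa,
      toMatrix_finSum (hBb.trans skewOfBlock_one)⟩
  · obtain ⟨r, hr⟩ := not_forall_not.1 singular
    have han := (hab.nondegenerate_or_nondegenerate ha hb hr).resolve_right hbn
    obtain ⟨k, B, one_le, hBb, hBa⟩ :=
      hab.symm.exists_basis_toMatrix_eq_of_not_nondegenerate hb ha han hbn
    have jordan_zero : superdiagonal ℂ 1 k k = jordanBlock k 0 := by
      rw [jordanBlock_eq_superdiagonal_add_smul_one, zero_smul, add_zero]
    exact ⟨.K k, one_le, B.reindex finSumFinEquiv, toMatrix_finSum (hBa.trans skewOfBlock_one),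
      toMatrix_finSum (hBb.trans (congrArg skewOfBlock jordan_zero))⟩

end IsIndecomposable

/-- The pencil `a - λ b` is represented by a block-diagonal matrix pencil of canonical blocks in
some basis. The blocks are indexed by an arbitrary finite type so that orthogonal sums can be
indexed by sum types. -/
def HasCanonicalForm (a b : BilinForm ℂ V) : Prop :=
  ∃ (ι : Type) (_ : Fintype ι) (_ : DecidableEq ι) (s : ι → SkewBlock)
    (B : Basis (Σ i, Fin (s i).size) ℂ V), (∀ i, (s i).valid) ∧
      toMatrix B a = blockDiagonal' (fun i ↦ (s i).matA) ∧
      toMatrix B b = blockDiagonal' (fun i ↦ (s i).matB)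

namespace HasCanonicalForm

theorem of_subsingleton [Subsingleton V] : HasCanonicalForm a b :=
  ⟨Empty, inferInstance, inferInstance, Empty.elim, .empty V, nofun, Subsingleton.elim _ _,
    Subsingleton.elim _ _⟩

theorem of_isIndecomposable [FiniteDimensional ℂ V] [Nontrivial V] (hab : IsIndecomposable a b)
    (ha : a.IsAlt) (hb : b.IsAlt) : HasCanonicalForm a b := by
  obtain ⟨s, valid, B, hBa, hBb⟩ := hab.exists_skewBlock ha hb
  refine ⟨Unit, inferInstance, inferInstance, fun _ ↦ s,
    B.reindex (Equiv.uniqueSigma fun _ : Unit ↦ Fin s.size).symm, fun _ ↦ valid, ?_, ?_⟩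
  · rw [toMatrix_reindex, hBa, blockDiagonal'_unique, Equiv.symm_symm]
  · rw [toMatrix_reindex, hBb, blockDiagonal'_unique, Equiv.symm_symm]

theorem of_isOrthogonalSplitting {U W : Submodule ℂ V} (h : IsOrthogonalSplitting a b U W)
    (ha : a.IsAlt) (hb : b.IsAlt) (hU : HasCanonicalForm (a.restrict U) (b.restrict U))
    (hW : HasCanonicalForm (a.restrict W) (b.restrict W)) : HasCanonicalForm a b := by
  obtain ⟨ι₁, _, _, s₁, B₁, valid₁, hB₁a, hB₁b⟩ := hU
  obtain ⟨ι₂, _, _, s₂, B₂, valid₂, hB₂a, hB₂b⟩ := hW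
  let B := (B₁.prod B₂).map (U.prodEquivOfIsCompl W h.isCompl)
  let σ : (Σ i, Fin (s₁ i).size) ⊕ (Σ i, Fin (s₂ i).size) ≃ Σ i, Fin (Sum.elim s₁ s₂ i).size :=
    (Equiv.sumSigmaDistrib fun i ↦ Fin (Sum.elim s₁ s₂ i).size).symm
  refine ⟨ι₁ ⊕ ι₂, inferInstance, inferInstance, Sum.elim s₁ s₂, B.reindex σ,
    Sum.rec valid₁ valid₂, ?_, ?_⟩
  · rw [toMatrix_reindex, toMatrix_prod_map_prodEquivOfIsCompl ha.isRefl h.isCompl h.left, hB₁a,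
      hB₂a]
    exact (blockDiagonal'_sum fun i ↦ (Sum.elim s₁ s₂ i).matA).symm
  · rw [toMatrix_reindex, toMatrix_prod_map_prodEquivOfIsCompl hb.isRefl h.isCompl h.right, hB₁b,
      hB₂b]
    exact (blockDiagonal'_sum fun i ↦ (Sum.elim s₁ s₂ i).matB).symm

end HasCanonicalForm

theorem hasCanonicalForm_of_isAlt [FiniteDimensional ℂ V] (ha : a.IsAlt) (hb : b.IsAlt) :
    HasCanonicalForm a b := by
  induction hn : Module.finrank ℂ V using Nat.strong_induction_on generalizing V with
  | _ n ih =>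
    cases subsingleton_or_nontrivial V
    · exact .of_subsingleton
    by_cases hab : IsIndecomposable a b
    · exact .of_isIndecomposable hab ha hb
    simp only [IsIndecomposable, not_forall, not_or] at hab
    obtain ⟨U, W, h, U_ne_bot, W_ne_bot⟩ := hab
    have U_ne_top : U ≠ ⊤ := fun hU ↦ W_ne_bot (eq_bot_of_top_isCompl (hU ▸ h.isCompl))
    have W_ne_top : W ≠ ⊤ := fun hW ↦ U_ne_bot (eq_bot_of_isCompl_top (hW ▸ h.isCompl))
    have restrict {Z : Submodule ℂ V} (hZ : Z ≠ ⊤) :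
        HasCanonicalForm (a.restrict Z) (b.restrict Z) :=
      ih _ (hn ▸ Submodule.finrank_lt hZ) (fun z ↦ ha z) (fun z ↦ hb z) rfl
    exact .of_isOrthogonalSplitting h ha hb (restrict U_ne_top) (restrict W_ne_top)

theorem HasCanonicalForm.exists_fin (h : HasCanonicalForm a b) :
    ∃ (n : ℕ) (s : Fin n → SkewBlock) (B : Basis (Σ i, Fin (s i).size) ℂ V),
      (∀ i, (s i).valid) ∧ toMatrix B a = blockDiagonal' (fun i ↦ (s i).matA) ∧
      toMatrix B b = blockDiagonal' (fun i ↦ (s i).matB) := by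
  obtain ⟨ι, _, _, s, B, valid, hBa, hBb⟩ := h
  let e : Fin (Fintype.card ι) ≃ ι := (Fintype.equivFin ι).symm
  let σ : (Σ i, Fin (s (e i)).size) ≃ Σ i, Fin (s i).size :=
    Equiv.sigmaCongrLeft (β := fun i ↦ Fin (s i).size) e
  refine ⟨_, fun i ↦ s (e i), B.reindex σ.symm, fun i ↦ valid (e i), ?_, ?_⟩
  · rw [toMatrix_reindex, hBa, Equiv.symm_symm, blockDiagonal'_comp e fun i ↦ (s i).matA]
  · rw [toMatrix_reindex, hBb, Equiv.symm_symm, blockDiagonal'_comp e fun i ↦ (s i).matB]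

end Complex

theorem isAlt_toBilin' {n : Type*} [Fintype n] [DecidableEq n] [NeZero (2 : K)] {A : Matrix n n K}
    (hA : Aᵀ = -A) : A.toBilin'.IsAlt := by
  intro v
  have eq_neg : A.toBilin' v v = -A.toBilin' v v := by
    rw [toBilin'_apply']
    conv_lhs => rw [dotProduct_mulVec, ← mulVec_transpose, hA, neg_mulVec, neg_dotProduct,
      dotProduct_comm]
  have two_mul_eq_zero : 2 * A.toBilin' v v = 0 := by
    rw [two_mul, ← eq_neg_iff_add_eq_zero, ← eq_neg]
  exact (mul_eq_zero.1 two_mul_eq_zero).resolve_left two_ne_zero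

/-- Canonical form of skew-symmetric matrix pencils under congruence (Thompson):
every skew-symmetric pencil `A − λB` is congruent to a direct sum of blocks
`H_h(μ)`, `K_k`, and `M_k`. -/
theorem skew_symmetric_pencil_canonical_form (m : ℕ)
    (A B : Matrix (Fin m) (Fin m) ℂ) (hA : Aᵀ = -A) (hB : Bᵀ = -B) :
    ∃ (S : Matrix (Fin m) (Fin m) ℂ) (n : ℕ) (blk : Fin n → SkewBlock)
      (e : Fin m ≃ (Σ i : Fin n, Fin (blk i).size)),
      IsUnit S ∧ (∀ i, (blk i).valid) ∧
      Sᵀ * A * S = (Matrix.blockDiagonal' fun i => (blk i).matA).submatrix e e ∧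
      Sᵀ * B * S = (Matrix.blockDiagonal' fun i => (blk i).matB).submatrix e e := by
  obtain ⟨n, blk, β, valid, hβA, hβB⟩ :=
    (hasCanonicalForm_of_isAlt (isAlt_toBilin' hA) (isAlt_toBilin' hB)).exists_fin
  let std := Pi.basisFun ℂ (Fin m)
  let e := std.indexEquiv β
  let S := std.toMatrix (β.reindex e.symm)
  have congruence (C : Matrix (Fin m) (Fin m) ℂ) :
      Sᵀ * C * S = (toMatrix β C.toBilin').submatrix e e := by
    have : toMatrix std C.toBilin' = C := by
      rw [LinearMap.BilinForm.toMatrix_basisFun, LinearMap.BilinForm.toMatrix'_toBilin']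
    nth_rw 1 [← this]
    rw [LinearMap.BilinForm.toMatrix_mul_basis_toMatrix, toMatrix_reindex, Equiv.symm_symm]
  let := std.invertibleToMatrix (β.reindex e.symm)
  exact ⟨S, n, blk, e, isUnit_of_invertible S, valid, hβA ▸ congruence A, hβB ▸ congruence B⟩
end
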